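/- Let 0 < r < 1 and θ = r + 3/4 (dimension d = 2). There exists a constant C, depending only on r and independent of T, such that the following holds. Let w₀ be a Schwartz function on ℝ², let T > 0, let f : [0,T] × ℝ² → ℂ be continuous with f(t,·) Schwartz for each t and t ↦ [f(t,·)]_θ integrable, and define w(t, ·) = e^{itD} w₀ + ∫₀^t e^{i(t−s)D} f(s, ·) ds (so that ∂_t w = i D w + f, w(0) = w₀). Then (∫₀^T {w(t, ·)}_r⁴ dt)^{1/4} ≤ C · ([w₀]_θ + ∫₀^T [f(t, ·)]_θ dt). -/

import Mathlib

open MeasureTheory ENNReal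
open scoped RealInnerProductSpace

noncomputable section

/-- Shorthand for Euclidean space `ℝ^d`. -/
abbrev Ed (d : ℕ) := EuclideanSpace ℝ (Fin d)

/-- The homogeneous Besov (Gagliardo) seminorm `[f]_{r,p}`. -/
def gagliardo (d : ℕ) (r p : ℝ) {F : Type*} [NormedAddCommGroup F] (f : Ed d → F) : ℝ≥0∞ :=
  (∫⁻ x, ∫⁻ y, (‖f x - f y‖₊ : ℝ≥0∞) ^ p / (‖x - y‖₊ : ℝ≥0∞) ^ (r * p + d)) ^ (1 / p)

/-- The homogeneous Hölder seminorm `{f}_r`. -/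
def holderSemi (d : ℕ) (r : ℝ) {F : Type*} [NormedAddCommGroup F] (f : Ed d → F) : ℝ≥0∞ :=
  ⨆ x, ⨆ y, (‖f x - f y‖₊ : ℝ≥0∞) / (‖x - y‖₊ : ℝ≥0∞) ^ r

/-- The Fourier transform `f̂(κ) = ∫ e^{-i x·κ} f(x) dx`. -/
def ftransform (d : ℕ) (f : Ed d → ℂ) (κ : Ed d) : ℂ :=
  ∫ x, Complex.exp (-(Complex.I * (⟪x, κ⟫ : ℂ))) * f x

/-- The homogeneous Sobolev seminorm `[f]_θ = ((2π)^{-d} ∫ |κ|^{2θ} |f̂(κ)|² dκ)^{1/2}`. -/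
def sobolevSemi (d : ℕ) (θ : ℝ) (f : Ed d → ℂ) : ℝ≥0∞ :=
  (ENNReal.ofReal ((2 * Real.pi) ^ (-(d : ℝ))) *
    ∫⁻ κ, (‖κ‖₊ : ℝ≥0∞) ^ (2 * θ) * (‖ftransform d f κ‖₊ : ℝ≥0∞) ^ (2 : ℕ)) ^ ((1 : ℝ) / 2)

/-- A symbol of class `S⁰_{ph}`: smooth away from the origin and positively
homogeneous of degree `0`. -/
def IsSymbol0 (d : ℕ) (a : Ed d → ℂ) : Prop :=
  ContDiffOn ℝ (⊤ : ℕ∞) a {0}ᶜ ∧ ∀ (c : ℝ) (κ : Ed d), 0 < c → κ ≠ 0 → a (c • κ) = a κ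

/-- The operator `𝔞[f](x) = (2π)^{-d} ∫ e^{i x·κ} a(κ) f̂(κ) dκ` associated with a symbol. -/
def symbOp (d : ℕ) (a : Ed d → ℂ) (f : Ed d → ℂ) (x : Ed d) : ℂ :=
  (((2 * Real.pi) ^ (-(d : ℝ)) : ℝ) : ℂ) *
    ∫ κ, Complex.exp (Complex.I * (⟪x, κ⟫ : ℂ)) * a κ * ftransform d f κ

/-- The partial derivative `∂_i f(x)`. -/
def pd (d : ℕ) (i : Fin d) (f : Ed d → ℝ) (x : Ed d) : ℝ :=
  fderiv ℝ f x (EuclideanSpace.single i 1)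

/-- The half-wave propagator `(e^{itD} g)(x) = (2π)^{-d} ∫ e^{i x·κ} e^{i t|κ|} ĝ(κ) dκ`. -/
def halfWave (d : ℕ) (t : ℝ) (g : Ed d → ℂ) (x : Ed d) : ℂ :=
  (((2 * Real.pi) ^ (-(d : ℝ)) : ℝ) : ℂ) *
    ∫ κ, Complex.exp (Complex.I * ((⟪x, κ⟫ : ℂ) + (t : ℂ) * ((‖κ‖ : ℝ) : ℂ))) *
      ftransform d g κ

end

/-!
Choose for each `t` a pair `(x(t), y(t))` nearly maximizing the Hölder quotient of `e^{itD} g`,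
measurably in `t`, so that the homogeneous estimate becomes the boundedness into `L⁴(dt)` of the
linear map `ĝ ↦ ∫ ĝ(κ) K_t(κ) dκ`, where
`K_t(κ) = e^{it|κ|} (e^{ix(t)·κ} - e^{iy(t)·κ}) |x(t) - y(t)|^{-r}`.
By duality (the `TT*` argument) it suffices to bound the quadratic form of the kernel
`∫ |κ|^{-2θ} K_t(κ) conj(K_s(κ)) dκ` by that of `C |t - s|^{-1/2}`, because the
Hardy–Littlewood–Sobolev inequality controls the latter on `L^{4/3}(ℝ)`. Now `|κ|^{-2θ}` is a
superposition over `ε` of the weights `e^{-ε|κ|} / |κ|`, whose plane-wave transform in dimension two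
is `2π / √((ε - it)² + |x|²) = O((ε|t|)^{-1/2})`; the cancellation in the difference of plane waves
gains a further factor `min(1, |x(t) - y(t)| / ε)`, which makes the integral over `ε` converge.
Minkowski's integral inequality then passes from the free evolution to the Duhamel term.
-/

section TTStar

variable {Ω X : Type*} [MeasurableSpace Ω] [MeasurableSpace X] {μ : Measure Ω} {ν : Measure X}
  [SFinite μ] {W : X → ℝ} {β : Ω → ℂ} {E : Ω → X → ℂ}

theorem integral_mul_norm_integral_sq [SFinite ν] (hW : Integrable W ν) (hβ : Integrable β μ)
    (hE : Measurable (Function.uncurry E)) (hE₁ : ∀ ω x, ‖E ω x‖ ≤ 1) :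
    ∫ x, ((W x * ‖∫ ω, β ω * E ω x ∂μ‖ ^ 2 : ℝ) : ℂ) ∂ν =
      ∫ p : Ω × Ω, (β p.1 * (starRingEnd ℂ) (β p.2)) *
        ∫ x, W x * (E p.1 x * (starRingEnd ℂ) (E p.2 x)) ∂ν ∂(μ.prod μ) := by
  have expand (x : X) : ((W x * ‖∫ ω, β ω * E ω x ∂μ‖ ^ 2 : ℝ) : ℂ) = ∫ p : Ω × Ω, W x *
      ((β p.1 * (starRingEnd ℂ) (β p.2)) * (E p.1 x * (starRingEnd ℂ) (E p.2 x))) ∂(μ.prod μ) := by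
    rw [integral_const_mul, Complex.ofReal_mul, Complex.ofReal_pow, ← Complex.mul_conj',
      ← integral_conj, ← integral_prod_mul]
    congr 2 with p
    rw [map_mul]
    ring
  have hββ : Integrable (fun p : Ω × Ω => β p.1 * (starRingEnd ℂ) (β p.2)) (μ.prod μ) :=
    hβ.mul_prod ((Complex.conjCLE : ℂ →L[ℝ] ℂ).integrable_comp hβ)
  have hprod : Integrable (Function.uncurry fun (x : X) (p : Ω × Ω) => (W x : ℂ) *
      ((β p.1 * (starRingEnd ℂ) (β p.2)) * (E p.1 x * (starRingEnd ℂ) (E p.2 x))))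
      (ν.prod (μ.prod μ)) := by
    simp only [Function.uncurry_def, ← mul_assoc _ (_ * _) (_ * _)]
    refine ((hW.ofReal (𝕜 := ℂ)).mul_prod hββ).mul_bdd (c := 1)
      (g := fun q : X × Ω × Ω => E q.2.1 q.1 * (starRingEnd ℂ) (E q.2.2 q.1)) ?_ ?_
    · exact ((hE.comp (measurable_snd.fst.prodMk measurable_fst)).mul
        (Complex.continuous_conj.measurable.comp
          (hE.comp (measurable_snd.snd.prodMk measurable_fst)))).aestronglyMeasurable
    · refine .of_forall fun q => ?_
      rw [norm_mul, RCLike.norm_conj]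
      exact mul_le_one₀ (hE₁ _ _) (norm_nonneg _) (hE₁ _ _)
  simp only [expand]
  rw [integral_integral_swap hprod]
  simp only [mul_left_comm (Complex.ofReal _), integral_const_mul]

theorem lintegral_mul_enorm_integral_sq_le [SFinite ν] (hW₀ : 0 ≤ W) (hW : Integrable W ν)
    (hβ : Integrable β μ) (hE : Measurable (Function.uncurry E)) (hE₁ : ∀ ω x, ‖E ω x‖ ≤ 1) :
    ∫⁻ x, ENNReal.ofReal (W x) * ‖∫ ω, β ω * E ω x ∂μ‖ₑ ^ 2 ∂ν ≤
      ∫⁻ p : Ω × Ω, ‖β p.1‖ₑ * ‖β p.2‖ₑ *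
        ‖∫ x, W x * (E p.1 x * (starRingEnd ℂ) (E p.2 x)) ∂ν‖ₑ ∂(μ.prod μ) := by
  set F : X → ℂ := fun x => ∫ ω, β ω * E ω x ∂μ
  have hFm : AEStronglyMeasurable F ν :=
    (hβ.aestronglyMeasurable.comp_snd.mul (f := fun q : X × Ω => β q.2)
      (g := fun q : X × Ω => E q.2 q.1)
      (hE.comp measurable_swap).aestronglyMeasurable).integral_prod_right'
  have hFb (x : X) : ‖F x‖ ≤ ∫ ω, ‖β ω‖ ∂μ := by
    refine norm_integral_le_of_norm_le hβ.norm (.of_forall fun ω => ?_)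
    rw [norm_mul]
    exact mul_le_of_le_one_right (norm_nonneg _) (hE₁ ω x)
  have hint : Integrable (fun x => W x * ‖F x‖ ^ 2) ν :=
    hW.mul_bdd (c := (∫ ω, ‖β ω‖ ∂μ) ^ 2) (hFm.norm.pow 2) <| .of_forall fun x => by
      simpa using pow_le_pow_left₀ (norm_nonneg _) (hFb x) 2
  have hpos (x : X) : 0 ≤ W x * ‖F x‖ ^ 2 := mul_nonneg (hW₀ x) (sq_nonneg _)
  calc ∫⁻ x, ENNReal.ofReal (W x) * ‖F x‖ₑ ^ 2 ∂ν
      = ENNReal.ofReal (∫ x, W x * ‖F x‖ ^ 2 ∂ν) := by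
        rw [ofReal_integral_eq_lintegral_ofReal hint (.of_forall hpos)]
        simp only [ENNReal.ofReal_mul (hW₀ _), ENNReal.ofReal_pow (norm_nonneg _), ofReal_norm]
    _ = ‖∫ x, ((W x * ‖F x‖ ^ 2 : ℝ) : ℂ) ∂ν‖ₑ := by
        rw [integral_complex_ofReal, ← ofReal_norm, Complex.norm_real,
          Real.norm_of_nonneg (integral_nonneg hpos)]
    _ = ‖∫ p : Ω × Ω, (β p.1 * (starRingEnd ℂ) (β p.2)) *
          ∫ x, W x * (E p.1 x * (starRingEnd ℂ) (E p.2 x)) ∂ν ∂(μ.prod μ)‖ₑ := by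
        rw [integral_mul_norm_integral_sq hW hβ hE hE₁]
    _ ≤ _ := by
        refine (enorm_integral_le_lintegral_enorm _).trans_eq (lintegral_congr fun p => ?_)
        rw [enorm_mul, enorm_mul, ← ofReal_norm ((starRingEnd ℂ) _), RCLike.norm_conj, ofReal_norm]

end TTStar

section PoissonKernel

open Complex Metric Real

theorem one_sub_mul_ne_zero_of_norm_lt_one {α z : ℂ} (hα : ‖α‖ < 1) (hz : ‖z‖ ≤ 1) :
    1 - α * z ≠ 0 := fun h => by
  have : ‖α * z‖ < 1 := by
    rw [norm_mul]
    exact mul_lt_one_of_nonneg_of_lt_one_left (norm_nonneg _) hα hz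
  rw [← sub_eq_zero.1 h, norm_one] at this
  exact this.false

theorem circleAverage_inv_one_sub_mul {α : ℂ} (hα : ‖α‖ < 1) :
    circleAverage (fun z => (1 - α * z)⁻¹) 0 1 = 1 := by
  have hd : DifferentiableOn ℂ (fun z => (1 - α * z)⁻¹) (closure (ball 0 |1|)) := by
    rw [closure_ball _ (by simp)]
    exact DifferentiableOn.fun_inv (by fun_prop) fun z hz =>
      one_sub_mul_ne_zero_of_norm_lt_one hα (by simpa using hz)
  simpa using hd.diffContOnCl.circleAverage

theorem circleAverage_inv_one_sub_mul_mul_inv {α β : ℂ} (hα : ‖α‖ < 1) (hβ : ‖β‖ < 1) :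
    circleAverage (fun z => ((1 - α * z) * (1 - β * z⁻¹))⁻¹) 0 1 = (1 - α * β)⁻¹ := by
  have hci {γ : ℂ} (hγ : ‖γ‖ < 1) : CircleIntegrable (fun z => (1 - γ * z)⁻¹) 0 1 :=
    ContinuousOn.circleIntegrable zero_le_one <| ContinuousOn.inv₀ (by fun_prop) fun z hz =>
      one_sub_mul_ne_zero_of_norm_lt_one hγ (by simpa using (mem_sphere_zero_iff_norm.1 hz).le)
  have hci' : CircleIntegrable (fun z => (1 - β * z⁻¹)⁻¹) 0 1 :=
    ContinuousOn.circleIntegrable zero_le_one <| ContinuousOn.inv₀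
      (ContinuousOn.sub (by fun_prop) (ContinuousOn.mul (by fun_prop)
        (continuousOn_inv₀.mono fun z hz => by
          simpa using ne_zero_of_mem_unit_sphere ⟨z, hz⟩))) fun z hz =>
      one_sub_mul_ne_zero_of_norm_lt_one hβ (by simp [mem_sphere_zero_iff_norm.1 hz])
  have hβ' : circleAverage (fun z => (1 - β * z⁻¹)⁻¹) 0 1 = 1 :=
    circleAverage_zero_one_congr_inv.trans (circleAverage_inv_one_sub_mul hβ)
  have partialFraction : Set.EqOn (fun z => ((1 - α * z) * (1 - β * z⁻¹))⁻¹)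
      (fun z => (1 - α * β)⁻¹ • ((1 - α * z)⁻¹ + (1 - β * z⁻¹)⁻¹ - 1)) (sphere 0 |1|) := by
    intro z hz
    have hz1 : ‖z‖ = 1 := by simpa using hz
    have hz0 : z ≠ 0 := by rintro rfl; simp at hz1
    have h₁ := one_sub_mul_ne_zero_of_norm_lt_one hα hz1.le
    have h₂ := one_sub_mul_ne_zero_of_norm_lt_one hβ (z := z⁻¹) (by simp [hz1])
    have h₃ := one_sub_mul_ne_zero_of_norm_lt_one hα hβ.le
    simp only [smul_eq_mul]
    have hzz := mul_inv_cancel₀ hz0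
    generalize z⁻¹ = y at h₂ hzz
    field_simp
    linear_combination (α * β) * hzz
  rw [circleAverage_congr_sphere partialFraction, circleAverage_fun_smul,
    circleAverage_fun_sub (CircleIntegrable.fun_add (hci hα) hci') (circleIntegrable_const _ _ _),
    circleAverage_fun_add (hci hα) hci', circleAverage_inv_one_sub_mul hα, hβ',
    circleAverage_const]
  simp

theorem exists_sq_eq_and_lt_norm_add {a : ℂ} (ha : 0 < a.re) {R : ℝ} (hR : 0 ≤ R) :
    ∃ w : ℂ, w ^ 2 = a ^ 2 + R ^ 2 ∧ R < ‖a + w‖ := by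
  obtain ⟨w, hw⟩ := IsAlgClosed.exists_pow_nat_eq (a ^ 2 + (R : ℂ) ^ 2) two_pos
  by_contra! h
  have h₁ := h w hw
  have h₂ := h (-w) (by rw [neg_sq, hw])
  have hprod : (a + w) * (a - w) = -(R : ℂ) ^ 2 := by linear_combination -hw
  have hnorm : ‖a + w‖ * ‖a + -w‖ = R * R := by
    rw [← sub_eq_add_neg, ← norm_mul, hprod, norm_neg, norm_pow, norm_real, Real.norm_of_nonneg hR,
      sq]
  obtain rfl | hRpos := hR.eq_or_lt
  · have := add_eq_zero_iff_eq_neg.1 (norm_le_zero_iff.1 h₁)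
    have := add_eq_zero_iff_eq_neg.1 (norm_le_zero_iff.1 h₂)
    grind [ha.ne', Complex.zero_re]
  have hnorm_eq : ‖a + w‖ = R := h₁.antisymm <| le_of_mul_le_mul_right
    (hnorm.symm.trans_le (mul_le_mul_of_nonneg_left h₂ (norm_nonneg _))) hRpos
  have hconj : a - w = -(starRingEnd ℂ) (a + w) := by
    have := mul_conj' (a + w)
    rw [hnorm_eq] at this
    have hne : a + w ≠ 0 := norm_pos_iff.1 (hnorm_eq ▸ hRpos)
    refine mul_left_cancel₀ hne ?_
    linear_combination hprod + this
  have hre := congrArg Complex.re hconj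
  simp only [sub_re, neg_re, conj_re, add_re] at hre
  linarith

theorem circleAverage_inv_sub_I_mul_inner_sq {a : ℂ} (ha : 0 < a.re) (ξ : ℂ) :
    circleAverage (fun z => (a - I * (⟪ξ, z⟫ : ℝ))⁻¹) 0 1 ^ 2 = (a ^ 2 + ‖ξ‖ ^ 2)⁻¹ := by
  -- With `w² = a² + ‖ξ‖²`, the denominator is a multiple of `(1 - α z) (1 - β z⁻¹)` on the unit
  -- circle, with `α` and `β` in the open unit disc.
  obtain ⟨w, hw, hlt⟩ := exists_sq_eq_and_lt_norm_add ha (norm_nonneg ξ)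
  have hpos : 0 < ‖a + w‖ := (norm_nonneg ξ).trans_lt hlt
  have hne : a + w ≠ 0 := norm_pos_iff.1 hpos
  set α := I * (starRingEnd ℂ) ξ / (a + w) with hα
  set β := I * ξ / (a + w) with hβ
  have hα₁ : ‖α‖ < 1 := by simpa [hα, RCLike.norm_conj] using (div_lt_one hpos).2 hlt
  have hβ₁ : ‖β‖ < 1 := by simpa [hβ] using (div_lt_one hpos).2 hlt
  have hαβ : (a + w) * (1 - α * β) = 2 * w := by
    have := conj_mul' ξ
    rw [hα, hβ]
    field_simp
    linear_combination -(starRingEnd ℂ) ξ * ξ * I_sq + this - hw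
  have factor : Set.EqOn (fun z => (a - I * (⟪ξ, z⟫ : ℝ))⁻¹)
      (fun z => (2 / (a + w)) • ((1 - α * z) * (1 - β * z⁻¹))⁻¹) (sphere 0 |1|) := by
    intro z hz
    have hz₁ : ‖z‖ = 1 := by simpa using hz
    have hinv : z⁻¹ = (starRingEnd ℂ) z := by simp [inv_def, normSq_eq_norm_sq, hz₁]
    have hinner : ((⟪ξ, z⟫ : ℝ) : ℂ) = ((starRingEnd ℂ) ξ * z + ξ * z⁻¹) / 2 := by
      rw [Complex.inner, re_eq_add_conj, map_mul, conj_conj, hinv]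
      ring
    have hzz : z * z⁻¹ = 1 := mul_inv_cancel₀ (norm_pos_iff.1 (hz₁ ▸ one_pos))
    have : a - I * (⟪ξ, z⟫ : ℝ) = (a + w) / 2 * ((1 - α * z) * (1 - β * z⁻¹)) := by
      have hαw : (a + w) * α = I * (starRingEnd ℂ) ξ := mul_div_cancel₀ _ hne
      have hβw : (a + w) * β = I * ξ := mul_div_cancel₀ _ hne
      rw [hinner]
      linear_combination (1 / 2 : ℂ) * hαβ + z / 2 * hαw + z⁻¹ / 2 * hβw -
        (a + w) * α * β / 2 * hzz
    simp only [this, mul_inv, inv_div, smul_eq_mul]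
  rw [circleAverage_congr_sphere factor, circleAverage_fun_smul,
    circleAverage_inv_one_sub_mul_mul_inv hα₁ hβ₁, ← hw, ← inv_pow, smul_eq_mul, div_mul_eq_mul_div,
    ← div_eq_mul_inv, div_div, mul_comm (1 - _), hαβ, div_mul_cancel_left₀ two_ne_zero]

end PoissonKernel

section WaveKernel

open Complex Real

variable {V : Type*} [NormedAddCommGroup V]

/-- The frequency weight `e^{-ε|κ|} / |κ|`, whose half-wave kernel in the plane is an explicit
algebraic function of `(t, x)`. -/
noncomputable def expWeight (ε : ℝ) (κ : V) : ℝ :=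
  rexp (-(ε * ‖κ‖)) / ‖κ‖

theorem expWeight_nonneg (ε : ℝ) (κ : V) : 0 ≤ expWeight ε κ :=
  div_nonneg (Real.exp_nonneg _) (norm_nonneg _)

@[fun_prop]
theorem measurable_expWeight [MeasurableSpace V] [OpensMeasurableSpace V] :
    Measurable fun q : ℝ × V => expWeight q.1 q.2 := by
  unfold expWeight
  fun_prop

variable [InnerProductSpace ℝ V]

/-- The space-time plane wave `e^{i (x·κ + t|κ|)}` solving the half-wave equation. -/
noncomputable def planeWave (x : V) (t : ℝ) (κ : V) : ℂ :=
  cexp (I * ((⟪x, κ⟫ : ℂ) + (t : ℂ) * ((‖κ‖ : ℝ) : ℂ)))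

theorem smul_expWeight_mul_planeWave_polarCoord_symm {ρ : ℝ} (hρ : 0 < ρ) (ε t φ : ℝ) (ξ : ℂ) :
    ρ • (expWeight ε (Complex.polarCoord.symm (ρ, φ)) *
      planeWave ξ t (Complex.polarCoord.symm (ρ, φ)) : ℂ) =
      cexp (-(ε - I * t - I * (⟪ξ, circleMap 0 1 φ⟫ : ℝ)) * ρ) := by
  have hz : Complex.polarCoord.symm (ρ, φ) = ρ • circleMap 0 1 φ := by
    rw [Complex.polarCoord_symm_apply, circleMap_zero, real_smul, Complex.ofReal_one, one_mul,
      exp_mul_I, ofReal_cos, ofReal_sin]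
  have hnorm : ‖ρ • circleMap 0 1 φ‖ = ρ := by simp [abs_of_pos hρ]
  simp only [expWeight, planeWave, hz, hnorm, real_inner_smul_right]
  rw [real_smul, ← mul_assoc, ← Complex.ofReal_mul, mul_div_cancel₀ _ hρ.ne', ofReal_exp,
    ← Complex.exp_add]
  congr 1
  push_cast
  ring

theorem integral_expWeight_mul_planeWave {ε : ℝ} (hε : 0 < ε) (t : ℝ) (ξ : ℂ) :
    ∫ z : ℂ, expWeight ε z * planeWave ξ t z =
      2 * π * circleAverage (fun z => (ε - I * t - I * (⟪ξ, z⟫ : ℝ))⁻¹) 0 1 := by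
  set b : ℝ → ℂ := fun φ => -(ε - I * t - I * (⟪ξ, circleMap 0 1 φ⟫ : ℝ)) with hb
  have hbre (φ : ℝ) : (b φ).re = -ε := by simp [hb]
  have hbper : Function.Periodic b (2 * π) := fun φ => by
    simp only [hb, periodic_circleMap 0 1 φ]
  have hbc : Continuous b := by fun_prop
  have hint : Integrable (fun p : ℝ × ℝ => cexp (b p.2 * p.1))
      ((volume.restrict (Set.Ioi 0)).prod (volume.restrict (Set.Ioo (-π) π))) := by
    refine ((integrableOn_exp_mul_Ioi (neg_neg_iff_pos.2 hε) 0).comp_fst _).mono'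
      (by fun_prop) (.of_forall fun p => ?_)
    simp [Complex.norm_exp, hbre]
  calc _ = ∫ p in Set.Ioi (0 : ℝ) ×ˢ Set.Ioo (-π) π, cexp (b p.2 * p.1) := by
        rw [← Complex.integral_comp_polarCoord_symm]
        exact setIntegral_congr_fun (measurableSet_Ioi.prod measurableSet_Ioo) fun p hp =>
          smul_expWeight_mul_planeWave_polarCoord_symm hp.1 ε t p.2 ξ
    _ = ∫ φ in Set.Ioo (-π) π, ∫ ρ : ℝ in Set.Ioi 0, cexp (b φ * ρ) := by
        rw [Measure.volume_eq_prod, ← Measure.prod_restrict, integral_prod_symm _ hint]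
    _ = ∫ φ in (-π)..π, -(b φ)⁻¹ := by
        rw [intervalIntegral.integral_of_le (by linarith [pi_pos]),
          integral_Ioc_eq_integral_Ioo]
        refine integral_congr_ae (.of_forall fun φ => ?_)
        dsimp only
        rw [integral_exp_mul_complex_Ioi (by rw [hbre]; linarith)]
        simp [neg_div]
    _ = ∫ φ in (0)..2 * π, -(b φ)⁻¹ := by
        have := (hbper.comp fun z => -z⁻¹).intervalIntegral_add_eq (-π) 0
        rwa [show -π + 2 * π = π by ring, zero_add] at this
    _ = _ := by
        simp only [circleAverage_def, hb, inv_neg, neg_neg, real_smul]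
        push_cast
        field_simp

theorem mul_abs_le_norm_sub_I_mul_sq_add_sq {ε : ℝ} (hε : 0 ≤ ε) (t R : ℝ) :
    ε * |t| ≤ ‖(ε - I * t) ^ 2 + (R : ℂ) ^ 2‖ := by
  have hfactor : (ε - I * t) ^ 2 + (R : ℂ) ^ 2 = (ε + I * ↑(R - t)) * (ε - I * ↑(R + t)) := by
    push_cast
    linear_combination (R ^ 2 : ℂ) * I_sq
  have hre (s : ℝ) : ε ≤ ‖(ε + I * s : ℂ)‖ := by
    simpa [abs_of_nonneg hε] using abs_re_le_norm (ε + I * s : ℂ)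
  have him (s : ℝ) : |s| ≤ ‖(ε + I * s : ℂ)‖ := by simpa using abs_im_le_norm (ε + I * s : ℂ)
  have hneg : (ε - I * ↑(R + t) : ℂ) = ε + I * ↑(-(R + t)) := by push_cast; ring
  rw [hfactor, norm_mul, hneg]
  obtain h | h : |t| ≤ |R - t| ∨ |t| ≤ |-(R + t)| := by grind
  · rw [mul_comm]
    gcongr
    exacts [h.trans (him _), hre _]
  · gcongr
    exacts [hre _, h.trans (him _)]

theorem enorm_integral_expWeight_mul_planeWave_le {ε : ℝ} (hε : 0 < ε) (t : ℝ) (x : Ed 2) :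
    ‖∫ κ, expWeight ε κ * planeWave x t κ‖ₑ ≤
      ENNReal.ofReal (2 * π) * (ENNReal.ofReal ε ^ (-(1 / 2) : ℝ) * ‖t‖ₑ ^ (-(1 / 2) : ℝ)) := by
  obtain rfl | ht := eq_or_ne t 0
  · simp [ENNReal.mul_top, pi_pos]
  have hpos : 0 < ε * |t| := mul_pos hε (abs_pos.2 ht)
  set Φ := Complex.orthonormalBasisOneI.repr
  have hΦ : ∫ κ, expWeight ε κ * planeWave x t κ =
      ∫ z : ℂ, expWeight ε z * planeWave (Φ.symm x) t z := by
    rw [← Φ.measurePreserving.integral_comp Φ.toHomeomorph.measurableEmbedding]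
    have hinner (z : ℂ) : ⟪x, Φ z⟫ = ⟪Φ.symm x, z⟫ := by
      rw [← Φ.inner_map_map, Φ.apply_symm_apply]
    simp only [expWeight, planeWave, LinearIsometryEquiv.norm_map, hinner]
  have hsq : ‖∫ κ, expWeight ε κ * planeWave x t κ‖ ^ 2 ≤ (2 * π) ^ 2 * (ε * |t|)⁻¹ := by
    rw [hΦ, integral_expWeight_mul_planeWave hε, ← norm_pow, mul_pow,
      circleAverage_inv_sub_I_mul_inner_sq (by simpa using hε), norm_mul, norm_inv]
    gcongr
    · simp [abs_of_pos pi_pos]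
    · exact mul_abs_le_norm_sub_I_mul_sq_add_sq hε.le t _
  have hle : ‖∫ κ, expWeight ε κ * planeWave x t κ‖ ≤ 2 * π * (ε * |t|) ^ (-(1 / 2) : ℝ) := by
    refine le_of_sq_le_sq (hsq.trans_eq ?_) (by positivity)
    rw [mul_pow _ (_ ^ _), ← Real.rpow_mul_natCast hpos.le]
    norm_num [Real.rpow_neg_one]
  rw [← ofReal_norm, ← ofReal_norm, Real.norm_eq_abs, ENNReal.ofReal_rpow_of_pos hε,
    ENNReal.ofReal_rpow_of_pos (abs_pos.2 ht), ← ENNReal.ofReal_mul (by positivity),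
    ← ENNReal.ofReal_mul (by positivity), ← Real.mul_rpow hε.le (abs_nonneg t)]
  exact ENNReal.ofReal_le_ofReal hle

theorem integrable_expWeight {ε : ℝ} (hε : 0 < ε) : Integrable (expWeight ε : Ed 2 → ℝ) := by
  have h : IntegrableOn (fun ρ : ℝ => ρ ^ (Module.finrank ℝ (Ed 2) - 1) • (rexp (-(ε * ρ)) / ρ))
      (Set.Ioi 0) := by
    refine (integrableOn_exp_mul_Ioi (neg_neg_iff_pos.2 hε) 0).congr_fun (fun ρ hρ => ?_)
      measurableSet_Ioi
    have hρ' : ρ ≠ 0 := (Set.mem_Ioi.1 hρ).ne'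
    simp [mul_div_cancel₀ _ hρ']
  exact (integrable_fun_norm_addHaar volume).2 h

end WaveKernel

section RieszEnergy

/-- The Riesz energy `∬ b(s) b(t) |s - t|^{-lam} dμ(s) dμ(t)` of a density on the line. -/
noncomputable def rieszEnergy (lam : ℝ) (μ : Measure ℝ) (b : ℝ → ℝ≥0∞) : ℝ≥0∞ :=
  ∫⁻ p : ℝ × ℝ, b p.1 * b p.2 * ‖p.1 - p.2‖ₑ ^ (-lam) ∂μ.prod μ

variable {lam : ℝ} {μ : Measure ℝ} {b b' : ℝ → ℝ≥0∞}

theorem rieszEnergy_mono (h : ∀ t, b t ≤ b' t) : rieszEnergy lam μ b ≤ rieszEnergy lam μ b' :=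
  lintegral_mono fun _ => by gcongr <;> exact h _

theorem rieszEnergy_const_mul {c : ℝ≥0∞} (hc : c ≠ ∞) :
    rieszEnergy lam μ (fun t => c * b t) = c ^ 2 * rieszEnergy lam μ b := by
  rw [rieszEnergy, rieszEnergy, ← lintegral_const_mul' _ _ (ENNReal.pow_ne_top hc)]
  exact lintegral_congr fun p => by ring

end RieszEnergy

section FixedScale

variable {V : Type*} [NormedAddCommGroup V] [InnerProductSpace ℝ V]

theorem norm_planeWave (x : V) (t : ℝ) (κ : V) : ‖planeWave x t κ‖ = 1 := by
  rw [planeWave, ← Complex.ofReal_mul, ← Complex.ofReal_add, Complex.norm_exp_I_mul_ofReal]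

@[fun_prop]
theorem continuous_planeWave : Continuous fun q : V × ℝ × V => planeWave q.1 q.2.1 q.2.2 := by
  unfold planeWave
  fun_prop

@[fun_prop]
theorem measurable_planeWave [MeasurableSpace V] [OpensMeasurableSpace V]
    [SecondCountableTopology V] :
    Measurable fun q : V × ℝ × V => planeWave q.1 q.2.1 q.2.2 :=
  continuous_planeWave.measurable

theorem planeWave_mul_conj (x x' : V) (t t' : ℝ) (κ : V) :
    planeWave x t κ * (starRingEnd ℂ) (planeWave x' t' κ) = planeWave (x - x') (t - t') κ := by
  rw [planeWave, planeWave, planeWave, ← Complex.exp_conj, ← Complex.exp_add, inner_sub_left]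
  congr 1
  simp only [map_mul, map_add, Complex.conj_I, Complex.conj_ofReal]
  push_cast
  ring

variable {Ω : Type*} [MeasurableSpace Ω] {μ : Measure Ω} {ν : Measure ℝ}
  {τ : Ω → ℝ} {z : Ω → Ed 2} {β : Ω → ℂ} {b : ℝ → ℝ≥0∞}

@[fun_prop]
theorem continuous_integral_mul_planeWave (hτ : Measurable τ) (hz : Measurable z)
    (hβ : Integrable β μ) :
    Continuous fun κ => ∫ ω, β ω * planeWave (z ω) (τ ω) κ ∂μ :=
  continuous_of_dominated (bound := fun ω => ‖β ω‖)
    (fun κ => hβ.aestronglyMeasurable.mul (by fun_prop))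
    (fun κ => .of_forall fun ω => by rw [norm_mul, norm_planeWave, mul_one]) hβ.norm
    (.of_forall fun ω => by fun_prop)

variable [SFinite μ]

theorem lintegral_expWeight_mul_enorm_integral_planeWave_sq_le {ε : ℝ} (hε : 0 < ε)
    (hτ : MeasurePreserving τ μ ν) (hz : Measurable z) (hβ : Integrable β μ) (hb : Measurable b)
    (hβb : ∀ ω, ‖β ω‖ₑ ≤ b (τ ω)) :
    ∫⁻ κ, ENNReal.ofReal (expWeight ε κ) * ‖∫ ω, β ω * planeWave (z ω) (τ ω) κ ∂μ‖ₑ ^ 2 ≤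
      ENNReal.ofReal (2 * Real.pi) * ENNReal.ofReal ε ^ (-(1 / 2) : ℝ) *
        rieszEnergy (1 / 2) ν b := by
  set C : ℝ≥0∞ := ENNReal.ofReal (2 * Real.pi) * ENNReal.ofReal ε ^ (-(1 / 2) : ℝ)
  have hE : Measurable (Function.uncurry fun ω κ => planeWave (z ω) (τ ω) κ) := by
    have := hτ.measurable
    fun_prop
  have hTT := lintegral_mul_enorm_integral_sq_le (expWeight_nonneg ε) (integrable_expWeight hε) hβ
    hE fun _ _ => (norm_planeWave _ _ _).le
  refine hTT.trans ?_
  have hle (p : Ω × Ω) : ‖β p.1‖ₑ * ‖β p.2‖ₑ * ‖∫ κ, expWeight ε κ * (planeWave (z p.1) (τ p.1) κ *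
      (starRingEnd ℂ) (planeWave (z p.2) (τ p.2) κ))‖ₑ ≤
      C * (b (τ p.1) * b (τ p.2) * ‖τ p.1 - τ p.2‖ₑ ^ (-(1 / 2) : ℝ)) := by
    simp only [planeWave_mul_conj]
    calc _ ≤ b (τ p.1) * b (τ p.2) * (ENNReal.ofReal (2 * Real.pi) *
            (ENNReal.ofReal ε ^ (-(1 / 2) : ℝ) * ‖τ p.1 - τ p.2‖ₑ ^ (-(1 / 2) : ℝ))) := by
          gcongr
          exacts [hβb _, hβb _, enorm_integral_expWeight_mul_planeWave_le hε _ _]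
      _ = _ := by ring
  have hK : Measurable fun p : ℝ × ℝ => b p.1 * b p.2 * ‖p.1 - p.2‖ₑ ^ (-(1 / 2) : ℝ) := by
    fun_prop
  calc _ ≤ ∫⁻ p : Ω × Ω, C * (b (τ p.1) * b (τ p.2) *
          ‖τ p.1 - τ p.2‖ₑ ^ (-(1 / 2) : ℝ)) ∂μ.prod μ := lintegral_mono hle
    _ = C * ∫⁻ p : Ω × Ω, b (τ p.1) * b (τ p.2) * ‖τ p.1 - τ p.2‖ₑ ^ (-(1 / 2) : ℝ) ∂μ.prod μ :=
        lintegral_const_mul _ (hK.comp (hτ.prod hτ).measurable)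
    _ = C * rieszEnergy (1 / 2) ν b := by
        rw [rieszEnergy, ← (hτ.prod hτ).lintegral_comp hK]
        rfl

end FixedScale

section PlaneWaveDifference

theorem planeWave_sub_planeWave {V : Type*} [NormedAddCommGroup V] [InnerProductSpace ℝ V]
    (x y : V) (t : ℝ) (κ : V) :
    planeWave x t κ - planeWave y t κ = ∫ u in Set.Ioc (0 : ℝ) 1,
      Complex.I * (⟪x - y, κ⟫ : ℝ) * planeWave (y + u • (x - y)) t κ := by
  have hderiv (u : ℝ) : HasDerivAt (fun u : ℝ => planeWave (y + u • (x - y)) t κ)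
      (Complex.I * (⟪x - y, κ⟫ : ℝ) * planeWave (y + u • (x - y)) t κ) u := by
    simp only [planeWave, inner_add_left, real_inner_smul_left]
    have : HasDerivAt (fun u : ℝ => Complex.I * (((⟪y, κ⟫ + u * ⟪x - y, κ⟫ : ℝ) : ℂ) + t * ‖κ‖))
        (Complex.I * (⟪x - y, κ⟫ : ℝ)) u := by
      refine HasDerivAt.const_mul _ (HasDerivAt.add_const _ (HasDerivAt.ofReal_comp ?_))
      simpa using ((hasDerivAt_id u).mul_const ⟪x - y, κ⟫).const_add ⟪y, κ⟫
    rw [mul_comm (Complex.I * _)]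
    exact this.cexp
  have hint : Continuous fun u : ℝ =>
      Complex.I * (⟪x - y, κ⟫ : ℝ) * planeWave (y + u • (x - y)) t κ := by
    unfold planeWave
    fun_prop
  rw [← intervalIntegral.integral_of_le zero_le_one,
    intervalIntegral.integral_eq_sub_of_hasDerivAt (fun u _ => hderiv u)
      (hint.intervalIntegrable 0 1)]
  simp

theorem enorm_sum_coord_mul_sq_le {d : ℕ} (κ : Ed d) (G : Fin d → ℂ) :
    ‖∑ j, κ j * G j‖ₑ ^ 2 ≤ ‖κ‖ₑ ^ 2 * ∑ j, ‖G j‖ₑ ^ 2 := by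
  have h : ‖∑ j, κ j * G j‖ ^ 2 ≤ ‖κ‖ ^ 2 * ∑ j, ‖G j‖ ^ 2 := by
    calc ‖∑ j, κ j * G j‖ ^ 2 ≤ (∑ j, ‖κ j‖ * ‖G j‖) ^ 2 := by
          gcongr
          simpa using norm_sum_le Finset.univ fun j => (κ j : ℂ) * G j
      _ ≤ (∑ j, ‖κ j‖ ^ 2) * ∑ j, ‖G j‖ ^ 2 := Finset.sum_mul_sq_le_sq_mul_sq _ _ _
      _ = _ := by rw [EuclideanSpace.norm_sq_eq]
  simp only [← ofReal_norm, ← ENNReal.ofReal_pow (norm_nonneg _)]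
  rw [← ENNReal.ofReal_sum_of_nonneg fun _ _ => by positivity, ← ENNReal.ofReal_mul (by positivity)]
  exact ENNReal.ofReal_le_ofReal h

theorem expWeight_mul_norm_sq_le {V : Type*} [NormedAddCommGroup V] {ε : ℝ} (hε : 0 < ε) (κ : V) :
    expWeight ε κ * ‖κ‖ ^ 2 ≤ 8 / ε ^ 2 * expWeight (ε / 2) κ := by
  have hexp : (ε / 2 * ‖κ‖) ^ 2 / 2 ≤ Real.exp (ε / 2 * ‖κ‖) := by
    have := Real.quadratic_le_exp_of_nonneg (x := ε / 2 * ‖κ‖) (by positivity)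
    have : 0 ≤ ε / 2 * ‖κ‖ := by positivity
    linarith
  have hsplit : Real.exp (-(ε / 2 * ‖κ‖)) = Real.exp (-(ε * ‖κ‖)) * Real.exp (ε / 2 * ‖κ‖) := by
    rw [← Real.exp_add]
    ring_nf
  calc expWeight ε κ * ‖κ‖ ^ 2 = 8 / ε ^ 2 * (expWeight ε κ * ((ε / 2 * ‖κ‖) ^ 2 / 2)) := by
        field_simp
        ring
    _ ≤ 8 / ε ^ 2 * (expWeight ε κ * Real.exp (ε / 2 * ‖κ‖)) := by
        gcongr
        exact expWeight_nonneg ε κ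
    _ = 8 / ε ^ 2 * expWeight (ε / 2) κ := by
        rw [expWeight, expWeight, hsplit]
        ring

variable {μ : Measure ℝ} {A : ℝ → ℂ} {x y : ℝ → Ed 2}

theorem integrable_mul_coord_comp_fst {d : ℕ} {v : ℝ → Ed d} (hv : Measurable v)
    (hA : AEStronglyMeasurable A μ) (hAv : Integrable (fun t => ‖A t‖ * ‖v t‖) μ) (j : Fin d) :
    Integrable (fun ω : ℝ × ℝ => A ω.1 * (Complex.I * (v ω.1 j : ℝ)))
      (μ.prod (volume.restrict (Set.Ioc 0 1))) := by
  refine Integrable.comp_fst (f := fun t => A t * (Complex.I * (v t j : ℝ))) ?_ _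
  refine hAv.mono' (hA.mul (by fun_prop)) (.of_forall fun t => ?_)
  simpa using mul_le_mul_of_nonneg_left (PiLp.norm_apply_le (v t) j) (norm_nonneg (A t))

theorem integral_mul_planeWave_sub [SFinite μ] (hx : Measurable x) (hy : Measurable y)
    (hA : AEStronglyMeasurable A μ) (hAv : Integrable (fun t => ‖A t‖ * ‖x t - y t‖) μ) (κ : Ed 2) :
    ∫ t, A t * (planeWave (x t) t κ - planeWave (y t) t κ) ∂μ =
      ∑ j, κ j * ∫ ω : ℝ × ℝ, A ω.1 * (Complex.I * ((x ω.1 - y ω.1) j : ℝ)) *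
        planeWave (y ω.1 + ω.2 • (x ω.1 - y ω.1)) ω.1 κ
          ∂μ.prod (volume.restrict (Set.Ioc 0 1)) := by
  have hE : Measurable fun ω : ℝ × ℝ => planeWave (y ω.1 + ω.2 • (x ω.1 - y ω.1)) ω.1 κ := by
    fun_prop
  have hint (j : Fin 2) := ((integrable_mul_coord_comp_fst (hx.sub hy) hA hAv j).mul_bdd (c := 1)
    hE.aestronglyMeasurable (.of_forall fun ω => (norm_planeWave _ _ _).le)).const_mul (κ j : ℂ)
  simp only [← integral_const_mul]
  rw [← integral_finsetSum _ fun j _ => by exact hint j,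
    integral_prod _ (integrable_finsetSum _ fun j _ => by exact hint j)]
  refine integral_congr_ae (.of_forall fun t => ?_)
  dsimp only
  rw [planeWave_sub_planeWave, ← integral_const_mul]
  refine integral_congr_ae (.of_forall fun u => ?_)
  simp only [PiLp.inner_apply, Fin.sum_univ_two]
  simp
  ring

end PlaneWaveDifference

section FixedScaleDifference

theorem enorm_add_sq_le {E : Type*} [SeminormedAddCommGroup E] (a b : E) :
    ‖a + b‖ₑ ^ 2 ≤ 2 * (‖a‖ₑ ^ 2 + ‖b‖ₑ ^ 2) := by
  have h : ‖a + b‖ ^ 2 ≤ 2 * (‖a‖ ^ 2 + ‖b‖ ^ 2) :=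
    (pow_le_pow_left₀ (norm_nonneg _) (norm_add_le a b) 2).trans add_sq_le
  have := ENNReal.ofReal_le_ofReal h
  rwa [ENNReal.ofReal_mul two_pos.le, ENNReal.ofReal_add (by positivity) (by positivity),
    ENNReal.ofReal_ofNat, ENNReal.ofReal_pow (norm_nonneg _), ENNReal.ofReal_pow (norm_nonneg _),
    ENNReal.ofReal_pow (norm_nonneg _), ofReal_norm, ofReal_norm, ofReal_norm] at this

theorem lintegral_mul_enorm_add_sq_le {X : Type*} [MeasurableSpace X] {ν : Measure X}
    {w : X → ℝ≥0∞} {f g : X → ℂ} (hw : Measurable w) (hf : Measurable f) :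
    ∫⁻ κ, w κ * ‖f κ + g κ‖ₑ ^ 2 ∂ν ≤
      2 * (∫⁻ κ, w κ * ‖f κ‖ₑ ^ 2 ∂ν + ∫⁻ κ, w κ * ‖g κ‖ₑ ^ 2 ∂ν) := by
  rw [← lintegral_add_left (by fun_prop), ← lintegral_const_mul' _ _ (by simp)]
  refine lintegral_mono fun κ => ?_
  calc w κ * ‖f κ + g κ‖ₑ ^ 2 ≤ w κ * (2 * (‖f κ‖ₑ ^ 2 + ‖g κ‖ₑ ^ 2)) := by
        gcongr
        exact enorm_add_sq_le _ _
    _ = _ := by ring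

variable {μ : Measure ℝ} {A : ℝ → ℂ} {x y : ℝ → Ed 2} {ε : ℝ}

theorem integral_mul_planeWave_sub_eq_sub (hx : Measurable x) (hy : Measurable y)
    (hA : Integrable A μ) (κ : Ed 2) :
    ∫ t, A t * (planeWave (x t) t κ - planeWave (y t) t κ) ∂μ =
      ∫ t, A t * planeWave (x t) t κ ∂μ - ∫ t, A t * planeWave (y t) t κ ∂μ := by
  have hint {z : ℝ → Ed 2} (hz : Measurable z) :
      Integrable (fun t => A t * planeWave (z t) t κ) μ :=
    hA.mul_bdd (c := 1) (by fun_prop) (.of_forall fun t => (norm_planeWave _ _ _).le)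
  simp only [mul_sub]
  exact integral_sub (hint hx) (hint hy)

@[fun_prop]
theorem measurable_integral_mul_planeWave_sub (hx : Measurable x) (hy : Measurable y)
    (hA : Integrable A μ) :
    Measurable fun κ => ∫ t, A t * (planeWave (x t) t κ - planeWave (y t) t κ) ∂μ := by
  simp only [integral_mul_planeWave_sub_eq_sub hx hy hA]
  exact (continuous_integral_mul_planeWave measurable_id hx hA).measurable.sub
    (continuous_integral_mul_planeWave measurable_id hy hA).measurable

theorem integral_mul_planeWave_sub_eq_indicator_add (hx : Measurable x) (hy : Measurable y)
    (hA : Integrable A μ) {D : Set ℝ} (hD : MeasurableSet D) (κ : Ed 2) :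
    ∫ t, A t * (planeWave (x t) t κ - planeWave (y t) t κ) ∂μ =
      ∫ t, D.indicator A t * (planeWave (x t) t κ - planeWave (y t) t κ) ∂μ +
        ∫ t, Dᶜ.indicator A t * (planeWave (x t) t κ - planeWave (y t) t κ) ∂μ := by
  have hint {B : ℝ → ℂ} (hB : Integrable B μ) :
      Integrable (fun t => B t * (planeWave (x t) t κ - planeWave (y t) t κ)) μ :=
    hB.mul_bdd (c := 2) (by fun_prop) (.of_forall fun t => (norm_sub_le _ _).trans_eq (by
      rw [norm_planeWave, norm_planeWave, one_add_one_eq_two]))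
  rw [← integral_add (hint (hA.indicator hD)) (hint (hA.indicator hD.compl))]
  simp only [← add_mul, Set.indicator_self_add_compl_apply]

variable [SFinite μ]

theorem lintegral_expWeight_mul_enorm_integral_planeWave_sub_sq_le (hε : 0 < ε)
    (hx : Measurable x) (hy : Measurable y) (hAm : Measurable A) (hA : Integrable A μ) :
    ∫⁻ κ, ENNReal.ofReal (expWeight ε κ) *
        ‖∫ t, A t * (planeWave (x t) t κ - planeWave (y t) t κ) ∂μ‖ₑ ^ 2 ≤
      ENNReal.ofReal (8 * Real.pi) * ENNReal.ofReal ε ^ (-(1 / 2) : ℝ) *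
        rieszEnergy (1 / 2) μ fun t => ‖A t‖ₑ := by
  set F : (ℝ → Ed 2) → Ed 2 → ℂ := fun z κ => ∫ t, A t * planeWave (z t) t κ ∂μ with hF
  set J := rieszEnergy (1 / 2) μ fun t => ‖A t‖ₑ
  have hFbound {z : ℝ → Ed 2} (hz : Measurable z) :
      ∫⁻ κ, ENNReal.ofReal (expWeight ε κ) * ‖F z κ‖ₑ ^ 2 ≤
        ENNReal.ofReal (2 * Real.pi) * ENNReal.ofReal ε ^ (-(1 / 2) : ℝ) * J :=
    lintegral_expWeight_mul_enorm_integral_planeWave_sq_le hε (MeasurePreserving.id μ) hz hA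
      hAm.enorm fun _ => le_rfl
  have hFm {z : ℝ → Ed 2} (hz : Measurable z) : Measurable (F z) :=
    (continuous_integral_mul_planeWave measurable_id hz hA).measurable
  calc _ = ∫⁻ κ, ENNReal.ofReal (expWeight ε κ) * ‖F x κ + -F y κ‖ₑ ^ 2 := by
        simp only [integral_mul_planeWave_sub_eq_sub hx hy hA, hF, ← sub_eq_add_neg (∫ _, _ ∂μ)]
    _ ≤ 2 * ((∫⁻ κ, ENNReal.ofReal (expWeight ε κ) * ‖F x κ‖ₑ ^ 2) +
          ∫⁻ κ, ENNReal.ofReal (expWeight ε κ) * ‖F y κ‖ₑ ^ 2) := by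
        simpa only [enorm_neg] using
          lintegral_mul_enorm_add_sq_le (ν := volume) (g := fun κ => -F y κ)
            (w := fun κ => ENNReal.ofReal (expWeight ε κ)) (by fun_prop) (hFm hx)
    _ ≤ 2 * (ENNReal.ofReal (2 * Real.pi) * ENNReal.ofReal ε ^ (-(1 / 2) : ℝ) * J +
          ENNReal.ofReal (2 * Real.pi) * ENNReal.ofReal ε ^ (-(1 / 2) : ℝ) * J) := by
        gcongr
        exacts [hFbound hx, hFbound hy]
    _ = _ := by
        rw [show 8 * Real.pi = 4 * (2 * Real.pi) by ring, ENNReal.ofReal_mul four_pos.le,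
          ENNReal.ofReal_ofNat]
        ring

theorem expWeight_mul_enorm_sum_coord_mul_sq_le {d : ℕ} (hε : 0 < ε) (κ : Ed d) (G : Fin d → ℂ) :
    ENNReal.ofReal (expWeight ε κ) * ‖∑ j, κ j * G j‖ₑ ^ 2 ≤
      ENNReal.ofReal (8 / ε ^ 2) * ∑ j, ENNReal.ofReal (expWeight (ε / 2) κ) * ‖G j‖ₑ ^ 2 := by
  calc _ ≤ ENNReal.ofReal (expWeight ε κ) * (‖κ‖ₑ ^ 2 * ∑ j, ‖G j‖ₑ ^ 2) := by
        gcongr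
        exact enorm_sum_coord_mul_sq_le κ G
    _ = ENNReal.ofReal (expWeight ε κ * ‖κ‖ ^ 2) * ∑ j, ‖G j‖ₑ ^ 2 := by
        rw [ENNReal.ofReal_mul (expWeight_nonneg ε κ), ENNReal.ofReal_pow (norm_nonneg _),
          ofReal_norm, mul_assoc]
    _ ≤ ENNReal.ofReal (8 / ε ^ 2 * expWeight (ε / 2) κ) * ∑ j, ‖G j‖ₑ ^ 2 :=
        mul_le_mul_left (ENNReal.ofReal_le_ofReal (expWeight_mul_norm_sq_le hε κ)) _
    _ = _ := by rw [ENNReal.ofReal_mul (by positivity), mul_assoc, Finset.mul_sum]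

theorem ofReal_half_rpow_neg_half_le (hε : 0 < ε) :
    ENNReal.ofReal (ε / 2) ^ (-(1 / 2) : ℝ) ≤ 2 * ENNReal.ofReal ε ^ (-(1 / 2) : ℝ) := by
  rw [ENNReal.ofReal_rpow_of_pos (half_pos hε), ENNReal.ofReal_rpow_of_pos hε,
    ← ENNReal.ofReal_ofNat, ← ENNReal.ofReal_mul two_pos.le, Real.div_rpow hε.le two_pos.le,
    div_eq_mul_inv, ← Real.rpow_neg two_pos.le, neg_neg, mul_comm]
  gcongr
  exact (Real.rpow_le_rpow_of_exponent_le one_le_two (by norm_num)).trans_eq (Real.rpow_one 2)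

theorem lintegral_expWeight_mul_enorm_integral_planeWave_sub_sq_le_div (hε : 0 < ε)
    (hx : Measurable x) (hy : Measurable y) (hAm : Measurable A)
    (hAv : Integrable (fun t => ‖A t‖ * ‖x t - y t‖) μ) :
    ∫⁻ κ, ENNReal.ofReal (expWeight ε κ) *
        ‖∫ t, A t * (planeWave (x t) t κ - planeWave (y t) t κ) ∂μ‖ₑ ^ 2 ≤
      ENNReal.ofReal (64 * Real.pi / ε ^ 2) * ENNReal.ofReal ε ^ (-(1 / 2) : ℝ) *
        rieszEnergy (1 / 2) μ fun t => ‖A t‖ₑ * ‖x t - y t‖ₑ := by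
  set J := rieszEnergy (1 / 2) μ fun t => ‖A t‖ₑ * ‖x t - y t‖ₑ
  set G : Fin 2 → Ed 2 → ℂ := fun j κ =>
    ∫ ω : ℝ × ℝ, A ω.1 * (Complex.I * ((x ω.1 - y ω.1) j : ℝ)) *
      planeWave (y ω.1 + ω.2 • (x ω.1 - y ω.1)) ω.1 κ ∂μ.prod (volume.restrict (Set.Ioc 0 1))
  have hGint := integrable_mul_coord_comp_fst (hx.sub hy) hAm.aestronglyMeasurable hAv
  have hGm (j : Fin 2) : Measurable (G j) :=
    (continuous_integral_mul_planeWave measurable_fst (by fun_prop) (hGint j)).measurable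
  have : IsProbabilityMeasure (volume.restrict (Set.Ioc (0 : ℝ) 1)) := ⟨by simp⟩
  have hG (j : Fin 2) : ∫⁻ κ, ENNReal.ofReal (expWeight (ε / 2) κ) * ‖G j κ‖ₑ ^ 2 ≤
      ENNReal.ofReal (2 * Real.pi) * ENNReal.ofReal (ε / 2) ^ (-(1 / 2) : ℝ) * J := by
    refine lintegral_expWeight_mul_enorm_integral_planeWave_sq_le (half_pos hε)
      measurePreserving_fst (by fun_prop) (hGint j) (by fun_prop) fun ω => ?_
    rw [enorm_mul, enorm_mul]
    gcongr
    rw [← ofReal_norm, Complex.norm_I, ENNReal.ofReal_one, one_mul, ← ofReal_norm,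
      Complex.norm_real, ofReal_norm]
    exact PiLp.enorm_apply_le (x ω.1 - y ω.1) j
  simp only [integral_mul_planeWave_sub hx hy hAm.aestronglyMeasurable hAv]
  calc _ ≤ ∫⁻ κ, ENNReal.ofReal (8 / ε ^ 2) *
          ∑ j, ENNReal.ofReal (expWeight (ε / 2) κ) * ‖G j κ‖ₑ ^ 2 :=
        lintegral_mono fun κ => expWeight_mul_enorm_sum_coord_mul_sq_le hε κ (G · κ)
    _ = ENNReal.ofReal (8 / ε ^ 2) *
          ∑ j, ∫⁻ κ, ENNReal.ofReal (expWeight (ε / 2) κ) * ‖G j κ‖ₑ ^ 2 := by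
        rw [lintegral_const_mul _ (by fun_prop), lintegral_finsetSum _ (by fun_prop)]
    _ ≤ ENNReal.ofReal (8 / ε ^ 2) * ∑ j : Fin 2,
          ENNReal.ofReal (2 * Real.pi) * (2 * ENNReal.ofReal ε ^ (-(1 / 2) : ℝ)) * J := by
        gcongr with j
        exact (hG j).trans (by gcongr; exact ofReal_half_rpow_neg_half_le hε)
    _ = _ := by
        rw [show 64 * Real.pi / ε ^ 2 = 8 / ε ^ 2 * (4 * (2 * Real.pi)) by ring,
          ENNReal.ofReal_mul (p := 8 / ε ^ 2) (by positivity), ENNReal.ofReal_mul four_pos.le,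
          ENNReal.ofReal_ofNat, Fin.sum_univ_two]
        ring

theorem lintegral_expWeight_mul_enorm_integral_planeWave_sub_sq_le_of_norm_sub_le (hε : 0 < ε)
    (hx : Measurable x) (hy : Measurable y) (hAm : Measurable A) (hA : Integrable A μ)
    (hnear : ∀ t, A t ≠ 0 → ‖x t - y t‖ ≤ ε) :
    ∫⁻ κ, ENNReal.ofReal (expWeight ε κ) *
        ‖∫ t, A t * (planeWave (x t) t κ - planeWave (y t) t κ) ∂μ‖ₑ ^ 2 ≤
      ENNReal.ofReal (64 * Real.pi) * ENNReal.ofReal ε ^ (-(1 / 2) : ℝ) *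
        rieszEnergy (1 / 2) μ fun t => ‖A t‖ₑ * ENNReal.ofReal (‖x t - y t‖ / ε) := by
  have hAv : Integrable (fun t => ‖A t‖ * ‖x t - y t‖) μ := by
    refine (hA.norm.mul_const ε).mono' (by fun_prop) (.of_forall fun t => ?_)
    rw [Real.norm_of_nonneg (by positivity)]
    by_cases ht : A t = 0
    · simp [ht]
    · exact mul_le_mul_of_nonneg_left (hnear t ht) (norm_nonneg _)
  have hscale (t : ℝ) : ‖A t‖ₑ * ‖x t - y t‖ₑ =
      ENNReal.ofReal ε * (‖A t‖ₑ * ENNReal.ofReal (‖x t - y t‖ / ε)) := by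
    rw [mul_left_comm, ← ENNReal.ofReal_mul hε.le, mul_div_cancel₀ _ hε.ne', ofReal_norm]
  refine (lintegral_expWeight_mul_enorm_integral_planeWave_sub_sq_le_div hε hx hy hAm hAv).trans_eq
    ?_
  simp only [hscale]
  rw [rieszEnergy_const_mul ENNReal.ofReal_ne_top, ← ENNReal.ofReal_pow hε.le, mul_mul_mul_comm,
    ← ENNReal.ofReal_mul (by positivity), div_mul_cancel₀ _ (by positivity), mul_assoc]

theorem lintegral_expWeight_mul_enorm_integral_planeWave_sub_sq_le_min (hε : 0 < ε)
    (hx : Measurable x) (hy : Measurable y) (hAm : Measurable A) (hA : Integrable A μ) :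
    ∫⁻ κ, ENNReal.ofReal (expWeight ε κ) *
        ‖∫ t, A t * (planeWave (x t) t κ - planeWave (y t) t κ) ∂μ‖ₑ ^ 2 ≤
      ENNReal.ofReal (144 * Real.pi) * ENNReal.ofReal ε ^ (-(1 / 2) : ℝ) *
        rieszEnergy (1 / 2) μ fun t => ‖A t‖ₑ * ENNReal.ofReal (min 1 (‖x t - y t‖ / ε)) := by
  set b : ℝ → ℝ≥0∞ := fun t => ‖A t‖ₑ * ENNReal.ofReal (min 1 (‖x t - y t‖ / ε))
  set D : Set ℝ := {t | ε < ‖x t - y t‖}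
  have hD : MeasurableSet D := measurableSet_lt measurable_const (by fun_prop)
  set F : (ℝ → ℂ) → Ed 2 → ℂ := fun B κ =>
    ∫ t, B t * (planeWave (x t) t κ - planeWave (y t) t κ) ∂μ
  have hfar : ∫⁻ κ, ENNReal.ofReal (expWeight ε κ) * ‖F (D.indicator A) κ‖ₑ ^ 2 ≤
      ENNReal.ofReal (8 * Real.pi) * ENNReal.ofReal ε ^ (-(1 / 2) : ℝ) *
        rieszEnergy (1 / 2) μ b := by
    refine (lintegral_expWeight_mul_enorm_integral_planeWave_sub_sq_le hε hx hy
      (hAm.indicator hD) (hA.indicator hD)).trans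
      (mul_le_mul_right (rieszEnergy_mono fun t => ?_) _)
    by_cases ht : t ∈ D
    · rw [Set.indicator_of_mem ht]
      simp only [b, min_eq_left ((one_le_div hε).2 (le_of_lt ht)), ENNReal.ofReal_one, mul_one,
        le_refl]
    · simp [Set.indicator_of_notMem ht]
  have hnear : ∫⁻ κ, ENNReal.ofReal (expWeight ε κ) * ‖F (Dᶜ.indicator A) κ‖ₑ ^ 2 ≤
      ENNReal.ofReal (64 * Real.pi) * ENNReal.ofReal ε ^ (-(1 / 2) : ℝ) *
        rieszEnergy (1 / 2) μ b := by
    refine (lintegral_expWeight_mul_enorm_integral_planeWave_sub_sq_le_of_norm_sub_le hε hx hy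
      (hAm.indicator hD.compl) (hA.indicator hD.compl) fun t ht =>
        not_lt.1 (Set.mem_of_indicator_ne_zero ht)).trans
      (mul_le_mul_right (rieszEnergy_mono fun t => ?_) _)
    by_cases ht : t ∈ Dᶜ
    · rw [Set.indicator_of_mem ht]
      simp only [b, min_eq_right ((div_le_one hε).2 (not_lt.1 ht)), le_refl]
    · simp [Set.indicator_of_notMem ht]
  calc _ ≤ 2 * ((∫⁻ κ, ENNReal.ofReal (expWeight ε κ) * ‖F (D.indicator A) κ‖ₑ ^ 2) +
          ∫⁻ κ, ENNReal.ofReal (expWeight ε κ) * ‖F (Dᶜ.indicator A) κ‖ₑ ^ 2) := by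
        simp only [integral_mul_planeWave_sub_eq_indicator_add hx hy hA hD]
        exact lintegral_mul_enorm_add_sq_le (by fun_prop)
          (measurable_integral_mul_planeWave_sub hx hy (hA.indicator hD))
    _ ≤ _ := mul_le_mul_right (add_le_add hfar hnear) 2
    _ = _ := by
        rw [← add_mul, ← add_mul, ← ENNReal.ofReal_add (by positivity) (by positivity),
          ← ENNReal.ofReal_ofNat, ← mul_assoc, ← mul_assoc, ← ENNReal.ofReal_mul two_pos.le]
        ring_nf

end FixedScaleDifference

section Subordination

theorem lintegral_rpow_mul_expWeight {V : Type*} [NormedAddCommGroup V] {s : ℝ} (hs : 0 < s)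
    {κ : V} (hκ : κ ≠ 0) :
    ∫⁻ ε in Set.Ioi 0, ENNReal.ofReal (ε ^ (s - 1) * expWeight ε κ) =
      ENNReal.ofReal (Real.Gamma s) * ‖κ‖ₑ ^ (-(s + 1)) := by
  have hκ' : 0 < ‖κ‖ := norm_pos_iff.2 hκ
  have hnonneg : ∀ᵐ ε ∂volume.restrict (Set.Ioi (0 : ℝ)), 0 ≤ ε ^ (s - 1) * expWeight ε κ :=
    (ae_restrict_iff' measurableSet_Ioi).2 <| .of_forall fun ε (hε : 0 < ε) =>
      mul_nonneg (Real.rpow_nonneg hε.le _) (expWeight_nonneg ε κ)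
  have hform (ε : ℝ) : ε ^ (s - 1) * expWeight ε κ =
      ε ^ (s - 1) * Real.exp (-(‖κ‖ * ε)) * ‖κ‖⁻¹ := by
    rw [expWeight, mul_comm ε]
    ring
  have hval : ∫ ε in Set.Ioi 0, ε ^ (s - 1) * expWeight ε κ =
      Real.Gamma s * ‖κ‖ ^ (-(s + 1)) := by
    simp only [hform, integral_mul_const]
    rw [Real.integral_rpow_mul_exp_neg_mul_Ioi hs hκ', neg_add, Real.rpow_add hκ',
      Real.rpow_neg_one, one_div, Real.inv_rpow hκ'.le, Real.rpow_neg hκ'.le]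
    ring
  have hint : IntegrableOn (fun ε => ε ^ (s - 1) * expWeight ε κ) (Set.Ioi 0) := by
    refine not_imp_comm.1 integral_undef (ne_of_gt ?_)
    rw [hval]
    exact mul_pos (Real.Gamma_pos_of_pos hs) (Real.rpow_pos_of_pos hκ' _)
  rw [← ofReal_integral_eq_lintegral_ofReal hint hnonneg, hval,
    ENNReal.ofReal_mul (Real.Gamma_pos_of_pos hs).le, ← ENNReal.ofReal_rpow_of_pos hκ', ofReal_norm]

theorem lintegral_Ioc_rpow_mul_min_sq_le {r c : ℝ} (hr : 0 < r) (hc : 0 < c) :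
    ∫⁻ ε in Set.Ioc 0 c, ENNReal.ofReal (ε ^ (2 * r - 1) * min 1 (c / ε) ^ 2) ≤
      ENNReal.ofReal (1 / (2 * r) * c ^ (2 * r)) := by
  have hint : IntegrableOn (fun ε : ℝ => ε ^ (2 * r - 1)) (Set.Ioc 0 c) :=
    (intervalIntegrable_iff_integrableOn_Ioc_of_le hc.le).1
      (intervalIntegral.intervalIntegrable_rpow' (by linarith))
  have hval : ∫ ε in Set.Ioc 0 c, ε ^ (2 * r - 1) = 1 / (2 * r) * c ^ (2 * r) := by
    rw [← intervalIntegral.integral_of_le hc.le, integral_rpow (.inl (by linarith)),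
      sub_add_cancel, Real.zero_rpow (by positivity)]
    ring
  rw [← hval, ofReal_integral_eq_lintegral_ofReal hint]
  · refine setLIntegral_mono' measurableSet_Ioc fun ε hε => ENNReal.ofReal_le_ofReal ?_
    have := hε.1
    exact mul_le_of_le_one_right (by positivity)
      (pow_le_one₀ (by positivity) (min_le_left _ _))
  · exact (ae_restrict_iff' measurableSet_Ioc).2 <| .of_forall fun ε hε =>
      Real.rpow_nonneg hε.1.le _

theorem lintegral_Ioi_rpow_mul_min_sq_le {r c : ℝ} (hr : r < 1) (hc : 0 < c) :
    ∫⁻ ε in Set.Ioi c, ENNReal.ofReal (ε ^ (2 * r - 1) * min 1 (c / ε) ^ 2) ≤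
      ENNReal.ofReal (1 / (2 - 2 * r) * c ^ (2 * r)) := by
  have hint : IntegrableOn (fun ε : ℝ => c ^ 2 * ε ^ (2 * r - 3)) (Set.Ioi c) :=
    (integrableOn_Ioi_rpow_of_lt (by linarith) hc).const_mul _
  have hval : ∫ ε in Set.Ioi c, c ^ 2 * ε ^ (2 * r - 3) = 1 / (2 - 2 * r) * c ^ (2 * r) := by
    have hexp : c ^ (2 * r) = c ^ (2 * r - 3 + 1) * c ^ 2 := by
      rw [← Real.rpow_add_natCast hc.ne']
      congr 1
      push_cast
      ring
    rw [integral_const_mul, integral_Ioi_rpow_of_lt (by linarith) hc, hexp, neg_div,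
      ← div_neg, show -(2 * r - 3 + 1) = 2 - 2 * r by ring]
    ring
  rw [← hval, ofReal_integral_eq_lintegral_ofReal hint]
  · refine setLIntegral_mono' measurableSet_Ioi fun ε hε => ENNReal.ofReal_le_ofReal ?_
    have hε₀ : 0 < ε := hc.trans hε
    calc ε ^ (2 * r - 1) * min 1 (c / ε) ^ 2 ≤ ε ^ (2 * r - 1) * (c / ε) ^ 2 := by
          gcongr
          exact min_le_right _ _
      _ = ε ^ (2 * r - 3) * ε ^ 2 * (c / ε) ^ 2 := by
          rw [← Real.rpow_add_natCast hε₀.ne']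
          congr 2
          push_cast
          ring
      _ = c ^ 2 * ε ^ (2 * r - 3) := by field_simp
  · exact (ae_restrict_iff' measurableSet_Ioi).2 <| .of_forall fun ε hε =>
      mul_nonneg (sq_nonneg c) (Real.rpow_nonneg (hc.trans hε).le _)

theorem lintegral_rpow_mul_min_sq_le {r c : ℝ} (hr₀ : 0 < r) (hr₁ : r < 1) (hc : 0 ≤ c) :
    ∫⁻ ε in Set.Ioi 0, ENNReal.ofReal (ε ^ (2 * r - 1) * min 1 (c / ε) ^ 2) ≤
      ENNReal.ofReal ((1 / (2 * r) + 1 / (2 - 2 * r)) * c ^ (2 * r)) := by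
  obtain rfl | hc := hc.eq_or_lt
  · simp
  have : 0 < 2 - 2 * r := by linarith
  rw [← Set.Ioc_union_Ioi_eq_Ioi hc.le, add_mul,
    ENNReal.ofReal_add (by positivity) (by positivity)]
  exact (lintegral_union_le _ _ _).trans (add_le_add (lintegral_Ioc_rpow_mul_min_sq_le hr₀ hc)
    (lintegral_Ioi_rpow_mul_min_sq_le hr₁ hc))

theorem min_one_mul_min_one_le {a b : ℝ} (ha : 0 ≤ a) (hb : 0 ≤ b) :
    min 1 a * min 1 b ≤ min 1 √(a * b) ^ 2 := by
  obtain h | h := le_total 1 √(a * b)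
  · rw [min_eq_left h, one_pow]
    exact mul_le_one₀ (min_le_left _ _) (by positivity) (min_le_left _ _)
  · rw [min_eq_right h, Real.sq_sqrt (mul_nonneg ha hb)]
    gcongr <;> exact min_le_right _ _

theorem lintegral_rpow_mul_min_mul_min_le {r h h' : ℝ} (hr₀ : 0 < r) (hr₁ : r < 1) (hh : 0 ≤ h)
    (hh' : 0 ≤ h') :
    ∫⁻ ε in Set.Ioi 0, ENNReal.ofReal (ε ^ (2 * r - 1) * (min 1 (h / ε) * min 1 (h' / ε))) ≤
      ENNReal.ofReal ((1 / (2 * r) + 1 / (2 - 2 * r)) * (h ^ r * h' ^ r)) := by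
  have hpow : √(h * h') ^ (2 * r) = h ^ r * h' ^ r := by
    rw [Real.rpow_mul (Real.sqrt_nonneg _), Real.rpow_two, Real.sq_sqrt (by positivity),
      Real.mul_rpow hh hh']
  refine le_trans ?_ ((lintegral_rpow_mul_min_sq_le hr₀ hr₁ (Real.sqrt_nonneg (h * h'))).trans_eq
    (by rw [hpow]))
  refine setLIntegral_mono' measurableSet_Ioi fun ε (hε : 0 < ε) => ENNReal.ofReal_le_ofReal ?_
  have hsqrt : √(h * h') / ε = √(h / ε * (h' / ε)) := by
    rw [div_mul_div_comm, Real.sqrt_div (by positivity), Real.sqrt_mul_self hε.le]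
  rw [hsqrt]
  gcongr
  exact min_one_mul_min_one_le (by positivity) (by positivity)

theorem lintegral_rpow_mul_rieszEnergy_min_le {μ : Measure ℝ} [SFinite μ] {lam r : ℝ}
    {a : ℝ → ℝ≥0∞} {h : ℝ → ℝ} (hr₀ : 0 < r) (hr₁ : r < 1) (ha : Measurable a)
    (hh : Measurable h) (hh₀ : ∀ t, 0 ≤ h t) :
    ∫⁻ ε in Set.Ioi 0, ENNReal.ofReal (ε ^ (2 * r - 1)) *
        rieszEnergy lam μ (fun t => a t * ENNReal.ofReal (min 1 (h t / ε))) ≤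
      ENNReal.ofReal (1 / (2 * r) + 1 / (2 - 2 * r)) *
        rieszEnergy lam μ fun t => a t * ENNReal.ofReal (h t ^ r) := by
  have : 0 < 2 - 2 * r := by linarith
  set k : ℝ × ℝ → ℝ≥0∞ := fun p => a p.1 * a p.2 * ‖p.1 - p.2‖ₑ ^ (-lam)
  have hk : Measurable k := by fun_prop
  set m : ℝ → ℝ × ℝ → ℝ := fun ε p => ε ^ (2 * r - 1) * (min 1 (h p.1 / ε) * min 1 (h p.2 / ε))
  have hm : Measurable (Function.uncurry m) := by fun_prop
  calc _ = ∫⁻ ε in Set.Ioi 0, ∫⁻ p, k p * ENNReal.ofReal (m ε p) ∂μ.prod μ := by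
        refine setLIntegral_congr_fun measurableSet_Ioi fun ε (hε : 0 < ε) => ?_
        have hmin (t : ℝ) : 0 ≤ min 1 (h t / ε) := le_min zero_le_one (div_nonneg (hh₀ t) hε.le)
        simp only [rieszEnergy]
        rw [← lintegral_const_mul' _ _ ENNReal.ofReal_ne_top]
        refine lintegral_congr fun p => ?_
        simp only [m]
        rw [ENNReal.ofReal_mul (by positivity), ENNReal.ofReal_mul (hmin _)]
        ring
    _ = ∫⁻ p, k p * (∫⁻ ε in Set.Ioi 0, ENNReal.ofReal (m ε p)) ∂μ.prod μ := by
        rw [lintegral_lintegral_swap (by fun_prop)]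
        exact lintegral_congr fun p => lintegral_const_mul _
          (hm.comp measurable_prodMk_right).ennreal_ofReal
    _ ≤ ∫⁻ p, k p * ENNReal.ofReal ((1 / (2 * r) + 1 / (2 - 2 * r)) * (h p.1 ^ r * h p.2 ^ r))
          ∂μ.prod μ :=
        lintegral_mono fun p => mul_le_mul_right
          (lintegral_rpow_mul_min_mul_min_le hr₀ hr₁ (hh₀ _) (hh₀ _)) _
    _ = _ := by
        rw [rieszEnergy, ← lintegral_const_mul' _ _ ENNReal.ofReal_ne_top]
        refine lintegral_congr fun p => ?_
        rw [ENNReal.ofReal_mul (by positivity), ENNReal.ofReal_mul (Real.rpow_nonneg (hh₀ _) _)]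
        ring

theorem ofReal_Gamma_mul_lintegral_rpow_mul {s : ℝ} (hs : 0 < s) {G : Ed 2 → ℝ≥0∞}
    (hG : Measurable G) :
    ENNReal.ofReal (Real.Gamma s) * ∫⁻ κ, ‖κ‖ₑ ^ (-(s + 1)) * G κ =
      ∫⁻ ε in Set.Ioi 0, ENNReal.ofReal (ε ^ (s - 1)) *
        ∫⁻ κ, ENNReal.ofReal (expWeight ε κ) * G κ := by
  calc _ = ∫⁻ κ, ∫⁻ ε in Set.Ioi 0, ENNReal.ofReal (ε ^ (s - 1) * expWeight ε κ) * G κ := by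
        rw [← lintegral_const_mul' _ _ ENNReal.ofReal_ne_top]
        refine lintegral_congr_ae ?_
        filter_upwards [measure_eq_zero_iff_ae_notMem.1 (measure_singleton (0 : Ed 2))] with κ hκ
        rw [lintegral_mul_const _ (by fun_prop), lintegral_rpow_mul_expWeight hs hκ, mul_assoc]
    _ = ∫⁻ ε in Set.Ioi 0, ∫⁻ κ, ENNReal.ofReal (ε ^ (s - 1) * expWeight ε κ) * G κ :=
        lintegral_lintegral_swap (by fun_prop)
    _ = _ := by
        refine setLIntegral_congr_fun measurableSet_Ioi fun ε (hε : 0 < ε) => ?_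
        beta_reduce
        rw [← lintegral_const_mul' _ _ ENNReal.ofReal_ne_top]
        refine lintegral_congr fun κ => ?_
        rw [ENNReal.ofReal_mul (Real.rpow_nonneg hε.le _), mul_assoc]

theorem lintegral_rpow_mul_enorm_integral_planeWave_sub_sq_le {μ : Measure ℝ} [SFinite μ] {r : ℝ}
    {A : ℝ → ℂ} {x y : ℝ → Ed 2} (hr₀ : 0 < r) (hr₁ : r < 1) (hx : Measurable x)
    (hy : Measurable y) (hAm : Measurable A) (hA : Integrable A μ) :
    ENNReal.ofReal (Real.Gamma (2 * r + 1 / 2)) * ∫⁻ κ, ‖κ‖ₑ ^ (-(2 * (r + 3 / 4))) *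
        ‖∫ t, A t * (planeWave (x t) t κ - planeWave (y t) t κ) ∂μ‖ₑ ^ 2 ≤
      ENNReal.ofReal (144 * Real.pi * (1 / (2 * r) + 1 / (2 - 2 * r))) *
        rieszEnergy (1 / 2) μ fun t => ‖A t‖ₑ * ENNReal.ofReal (‖x t - y t‖ ^ r) := by
  have hF : Measurable fun κ => ∫ t, A t * (planeWave (x t) t κ - planeWave (y t) t κ) ∂μ :=
    measurable_integral_mul_planeWave_sub hx hy hA
  rw [show 2 * (r + 3 / 4) = 2 * r + 1 / 2 + 1 by ring,
    ofReal_Gamma_mul_lintegral_rpow_mul (by positivity) (hF.enorm.pow_const 2),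
    ENNReal.ofReal_mul (by positivity), mul_assoc]
  refine le_trans ?_ (mul_le_mul_right (lintegral_rpow_mul_rieszEnergy_min_le hr₀ hr₁
    (by fun_prop) (by fun_prop) fun t => norm_nonneg (x t - y t)) _)
  rw [← lintegral_const_mul' _ _ ENNReal.ofReal_ne_top]
  refine setLIntegral_mono' measurableSet_Ioi fun ε (hε : 0 < ε) => ?_
  refine (mul_le_mul_right (lintegral_expWeight_mul_enorm_integral_planeWave_sub_sq_le_min hε hx hy
    hAm hA) _).trans_eq ?_
  have hpow : ENNReal.ofReal (ε ^ (2 * r - 1)) =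
      ENNReal.ofReal (ε ^ (2 * r + 1 / 2 - 1)) * ENNReal.ofReal ε ^ (-(1 / 2) : ℝ) := by
    rw [ENNReal.ofReal_rpow_of_pos hε, ← ENNReal.ofReal_mul (by positivity), ← Real.rpow_add hε]
    ring_nf
  rw [hpow]
  ring

end Subordination

section HardyLittlewoodSobolev

theorem lintegral_comp_abs (f : ℝ → ℝ≥0∞) : ∫⁻ u, f |u| = 2 * ∫⁻ u in Set.Ioi 0, f u := by
  have hpos : ∫⁻ u in Set.Ioi (0 : ℝ), f |u| = ∫⁻ u in Set.Ioi 0, f u :=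
    setLIntegral_congr_fun measurableSet_Ioi fun u (hu : 0 < u) => by
      rw [abs_of_pos hu]
  have hneg : ∫⁻ u in (Set.Ioi (0 : ℝ))ᶜ, f |u| = ∫⁻ u in Set.Ioi (0 : ℝ), f |u| := by
    have hsymm :=
      (Measure.measurePreserving_neg (volume : Measure ℝ)).setLIntegral_comp_preimage_emb
        (MeasurableEquiv.neg ℝ).measurableEmbedding (fun u => f |u|) (Set.Ioi 0)
    simpa only [abs_neg, Set.neg_preimage, Set.neg_Ioi, neg_zero, Set.compl_Ioi,
      setLIntegral_congr Iio_ae_eq_Iic] using hsymm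
  rw [← lintegral_add_compl (fun u => f |u|) measurableSet_Ioi, hneg, hpos, two_mul]

theorem setLIntegral_comp_abs_sub (f : ℝ → ℝ≥0∞) {U : Set ℝ} (hU : MeasurableSet U) (t : ℝ) :
    ∫⁻ s in {s | |t - s| ∈ U}, f |t - s| = 2 * ∫⁻ u in U ∩ Set.Ioi 0, f u := by
  have hV : MeasurableSet {s | |t - s| ∈ U} := measurableSet_preimage (by fun_prop) hU
  rw [← setLIntegral_indicator hU, ← lintegral_comp_abs,
    ← lintegral_sub_left_eq_self (fun u => U.indicator f |u|) t, ← lintegral_indicator hV]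
  rfl

variable {lam δ : ℝ}

theorem setLIntegral_abs_sub_le_enorm_rpow (hlam : lam < 1) (hδ : 0 < δ) (t : ℝ) :
    ∫⁻ s in {s | |t - s| ≤ δ}, ‖t - s‖ₑ ^ (-lam) =
      ENNReal.ofReal (2 / (1 - lam) * δ ^ (1 - lam)) := by
  have hint : IntegrableOn (fun u : ℝ => u ^ (-lam)) (Set.Ioc 0 δ) :=
    (intervalIntegrable_iff_integrableOn_Ioc_of_le hδ.le).1
      (intervalIntegral.intervalIntegrable_rpow' (by linarith))
  have hval : ∫ u in Set.Ioc 0 δ, u ^ (-lam) = δ ^ (1 - lam) / (1 - lam) := by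
    rw [← intervalIntegral.integral_of_le hδ.le, integral_rpow (.inl (by linarith)),
      Real.zero_rpow (by linarith), sub_zero, neg_add_eq_sub]
  calc _ = 2 * ∫⁻ u in Set.Ioc 0 δ, ENNReal.ofReal u ^ (-lam) := by
        simp only [← ofReal_norm, Real.norm_eq_abs]
        rw [← Set.Ioi_inter_Iic, Set.inter_comm]
        exact setLIntegral_comp_abs_sub (fun u => ENNReal.ofReal u ^ (-lam)) measurableSet_Iic t
    _ = 2 * ∫⁻ u in Set.Ioc 0 δ, ENNReal.ofReal (u ^ (-lam)) := by
        congr 1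
        exact setLIntegral_congr_fun measurableSet_Ioc fun u hu => ENNReal.ofReal_rpow_of_pos hu.1
    _ = _ := by
        rw [← ofReal_integral_eq_lintegral_ofReal hint, hval, ← ENNReal.ofReal_ofNat,
          ← ENNReal.ofReal_mul two_pos.le]
        · ring_nf
        · exact (ae_restrict_iff' measurableSet_Ioc).2 <| .of_forall fun u hu =>
            Real.rpow_nonneg hu.1.le _

theorem setLIntegral_lt_abs_sub_enorm_rpow_neg_two (hδ : 0 < δ) (t : ℝ) :
    ∫⁻ s in {s | δ < |t - s|}, ‖t - s‖ₑ ^ (-2 : ℝ) = ENNReal.ofReal (2 / δ) := by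
  have hint : IntegrableOn (fun u : ℝ => u ^ (-2 : ℝ)) (Set.Ioi δ) :=
    integrableOn_Ioi_rpow_of_lt (by norm_num) hδ
  have hval : ∫ u in Set.Ioi δ, u ^ (-2 : ℝ) = 1 / δ := by
    rw [integral_Ioi_rpow_of_lt (by norm_num) hδ, show (-2 + 1 : ℝ) = -1 by norm_num,
      Real.rpow_neg_one]
    ring
  calc _ = 2 * ∫⁻ u in Set.Ioi δ, ENNReal.ofReal u ^ (-2 : ℝ) := by
        simp only [← ofReal_norm, Real.norm_eq_abs]
        have hsub : Set.Ioi δ ∩ Set.Ioi 0 = Set.Ioi δ :=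
          Set.inter_eq_left.2 (Set.Ioi_subset_Ioi hδ.le)
        rw [← hsub]
        exact setLIntegral_comp_abs_sub (fun u => ENNReal.ofReal u ^ (-2 : ℝ)) measurableSet_Ioi t
    _ = 2 * ∫⁻ u in Set.Ioi δ, ENNReal.ofReal (u ^ (-2 : ℝ)) := by
        congr 1
        exact setLIntegral_congr_fun measurableSet_Ioi fun u hu =>
          ENNReal.ofReal_rpow_of_pos (hδ.trans hu)
    _ = _ := by
        rw [← ofReal_integral_eq_lintegral_ofReal hint, hval, ← ENNReal.ofReal_ofNat,
          ← ENNReal.ofReal_mul two_pos.le]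
        · ring_nf
        · exact (ae_restrict_iff' measurableSet_Ioi).2 <| .of_forall fun u hu =>
            Real.rpow_nonneg (hδ.trans hu).le _

variable {μ : Measure ℝ} {b : ℝ → ℝ≥0∞}

theorem setLIntegral_mul_enorm_sub_rpow_le (hμ : μ ≤ volume) (hb : Measurable b) (hlam₀ : 0 < lam)
    (hlam₁ : lam < 1) (hδ : 0 < δ) (B : ℝ≥0∞) (t : ℝ) :
    ∫⁻ s in {s | b s ≤ B}, b s * ‖t - s‖ₑ ^ (-lam) ∂μ ≤
      B * ENNReal.ofReal (2 / (1 - lam) * δ ^ (1 - lam)) +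
        (∫⁻ s, b s ^ (2 / (2 - lam)) ∂μ) ^ ((2 - lam) / 2) *
          ENNReal.ofReal (2 / δ) ^ (lam / 2) := by
  set N : Set ℝ := {s | |t - s| ≤ δ}
  have hN : MeasurableSet N := measurableSet_le (by fun_prop) (by fun_prop)
  have hS : MeasurableSet {s | b s ≤ B} := measurableSet_le hb measurable_const
  have hNc : Nᶜ = {s | δ < |t - s|} := by ext; simp [N]
  rw [← lintegral_inter_add_sdiff _ _ hN]
  gcongr ?_ + ?_
  · calc _ ≤ ∫⁻ s in {s | b s ≤ B} ∩ N, B * ‖t - s‖ₑ ^ (-lam) ∂μ :=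
          setLIntegral_mono' (hS.inter hN) fun s hs => by gcongr; exact hs.1
      _ ≤ ∫⁻ s in N, B * ‖t - s‖ₑ ^ (-lam) :=
          lintegral_mono' (Measure.restrict_mono Set.inter_subset_right hμ) le_rfl
      _ = _ := by
          rw [lintegral_const_mul _ (by fun_prop), setLIntegral_abs_sub_le_enorm_rpow hlam₁ hδ]
  · calc _ ≤ ∫⁻ s in Nᶜ, b s * ‖t - s‖ₑ ^ (-lam) ∂μ :=
          lintegral_mono' (Measure.restrict_mono (fun _ h => h.2) le_rfl) le_rfl
      _ ≤ _ := ENNReal.lintegral_mul_le_Lp_mul_Lq _ (p := 2 / (2 - lam)) (q := 2 / lam)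
          ((Real.holderConjugate_iff).2 ⟨by rw [lt_div_iff₀] <;> linarith, by field_simp; ring⟩)
          (by fun_prop) (by fun_prop)
      _ ≤ _ := by
          rw [one_div_div, one_div_div]
          gcongr
          · linarith
          · exact Measure.restrict_le_self
          · rw [← setLIntegral_lt_abs_sub_enorm_rpow_neg_two hδ t, ← hNc]
            refine lintegral_mono' (Measure.restrict_mono le_rfl hμ) fun s => ?_
            rw [← ENNReal.rpow_mul, neg_mul, mul_div_cancel₀ _ hlam₀.ne']

-- This choice of `δ` balances the contributions of `|t - s| < δ` and of `|t - s| ≥ δ`.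
theorem mul_add_mul_rpow_le_of_eq {B S : ℝ} (hB : 0 < B) (hS : 0 < S) (hlam₀ : 0 < lam)
    (hlam₁ : lam < 1) (hδ : δ = S * B ^ (-(2 / (2 - lam)))) :
    B * (2 / (1 - lam) * δ ^ (1 - lam)) + S ^ ((2 - lam) / 2) * (2 / δ) ^ (lam / 2) ≤
      (2 / (1 - lam) + 2) * (S ^ (1 - lam) * B ^ (lam / (2 - lam))) := by
  have hlam : 2 - lam ≠ 0 := by linarith
  have hnear : B * δ ^ (1 - lam) = S ^ (1 - lam) * B ^ (lam / (2 - lam)) := by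
    rw [hδ, Real.mul_rpow hS.le (by positivity), ← Real.rpow_mul hB.le, mul_left_comm,
      ← Real.rpow_one_add' hB.le] <;>
      rw [show 1 + -(2 / (2 - lam)) * (1 - lam) = lam / (2 - lam) by field_simp; ring]
    positivity
  have hfar : S ^ ((2 - lam) / 2) * δ⁻¹ ^ (lam / 2) = S ^ (1 - lam) * B ^ (lam / (2 - lam)) := by
    rw [hδ, mul_inv, ← Real.rpow_neg hB.le, neg_neg, ← Real.rpow_neg_one S,
      Real.mul_rpow (by positivity) (by positivity), ← Real.rpow_mul hB.le, ← Real.rpow_mul hS.le,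
      ← mul_assoc, ← Real.rpow_add hS]
    congr 2
    · ring
    · field_simp
  have htwo : (2 : ℝ) ^ (lam / 2) ≤ 2 := by
    conv_rhs => rw [← Real.rpow_one 2]
    exact Real.rpow_le_rpow_of_exponent_le one_le_two (by linarith)
  calc _ = 2 / (1 - lam) * (B * δ ^ (1 - lam)) +
        2 ^ (lam / 2) * (S ^ ((2 - lam) / 2) * δ⁻¹ ^ (lam / 2)) := by
        rw [div_eq_mul_inv 2 δ, Real.mul_rpow two_pos.le (by rw [hδ]; positivity)]
        ring
    _ ≤ _ := by
        rw [hnear, hfar, ← add_mul]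
        gcongr

theorem setLIntegral_mul_enorm_sub_rpow_le_rpow (hμ : μ ≤ volume) (hb : Measurable b)
    (hlam₀ : 0 < lam) (hlam₁ : lam < 1) (hS₀ : ∫⁻ s, b s ^ (2 / (2 - lam)) ∂μ ≠ 0)
    (hS : ∫⁻ s, b s ^ (2 / (2 - lam)) ∂μ ≠ ∞) {B : ℝ≥0∞} (hB₀ : B ≠ 0) (hB : B ≠ ∞) (t : ℝ) :
    ∫⁻ s in {s | b s ≤ B}, b s * ‖t - s‖ₑ ^ (-lam) ∂μ ≤
      ENNReal.ofReal (2 / (1 - lam) + 2) *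
        ((∫⁻ s, b s ^ (2 / (2 - lam)) ∂μ) ^ (1 - lam) * B ^ (lam / (2 - lam))) := by
  have : 0 < 1 - lam := by linarith
  have : 0 < 2 - lam := by linarith
  have hB' := ENNReal.toReal_pos hB₀ hB
  have hS' := ENNReal.toReal_pos hS₀ hS
  refine (setLIntegral_mul_enorm_sub_rpow_le hμ hb hlam₀ hlam₁ (mul_pos hS'
    (Real.rpow_pos_of_pos hB' (-(2 / (2 - lam))))) B t).trans ?_
  rw [← ENNReal.ofReal_toReal hB, ← ENNReal.ofReal_toReal hS, ENNReal.toReal_ofReal hB'.le,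
    ENNReal.toReal_ofReal hS'.le]
  set B' := B.toReal
  set S' := (∫⁻ s, b s ^ (2 / (2 - lam)) ∂μ).toReal
  rw [ENNReal.ofReal_rpow_of_pos hS', ENNReal.ofReal_rpow_of_pos hS',
    ENNReal.ofReal_rpow_of_pos hB', ENNReal.ofReal_rpow_of_pos (by positivity),
    ← ENNReal.ofReal_mul hB'.le,
    ← ENNReal.ofReal_mul (by positivity), ← ENNReal.ofReal_mul (by positivity),
    ← ENNReal.ofReal_mul (by positivity), ← ENNReal.ofReal_add (by positivity) (by positivity)]
  exact ENNReal.ofReal_le_ofReal (mul_add_mul_rpow_le_of_eq hB' hS' hlam₀ hlam₁ rfl)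

theorem ae_setLIntegral_mul_mul_enorm_sub_rpow_le (hμ : μ ≤ volume) (hb : Measurable b)
    (hlam₀ : 0 < lam) (hlam₁ : lam < 1) (hfin : ∀ t, b t ≠ ∞)
    (hS : ∫⁻ s, b s ^ (2 / (2 - lam)) ∂μ ≠ ∞) :
    ∀ᵐ t ∂μ, ∫⁻ s in {s | b s ≤ b t}, b t * (b s * ‖t - s‖ₑ ^ (-lam)) ∂μ ≤
      ENNReal.ofReal (2 / (1 - lam) + 2) * (∫⁻ s, b s ^ (2 / (2 - lam)) ∂μ) ^ (1 - lam) *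
        b t ^ (2 / (2 - lam)) := by
  have h₂ : 0 < 2 - lam := by linarith
  set S := ∫⁻ s, b s ^ (2 / (2 - lam)) ∂μ
  have hzero : ∀ᵐ t ∂μ, S = 0 → b t = 0 := by
    by_cases h : S = 0
    · filter_upwards [(lintegral_eq_zero_iff (by fun_prop)).1 h] with t ht _
      exact (ENNReal.rpow_eq_zero_iff_of_pos (by positivity)).1 ht
    · exact .of_forall fun t h' => absurd h' h
  filter_upwards [hzero] with t ht
  obtain hbt | hbt := eq_or_ne (b t) 0
  · simp [hbt]
  have hpow : b t ^ (2 / (2 - lam)) = b t * b t ^ (lam / (2 - lam)) := by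
    nth_rw 2 [← ENNReal.rpow_one (b t)]
    rw [← ENNReal.rpow_add _ _ hbt (hfin t)]
    congr 1
    field_simp
    ring
  rw [lintegral_const_mul' _ _ (hfin t), hpow]
  refine (mul_le_mul_right (setLIntegral_mul_enorm_sub_rpow_le_rpow hμ hb hlam₀ hlam₁
    (mt ht hbt) hS hbt (hfin t) t) _).trans_eq ?_
  ring

theorem rieszEnergy_le_two_mul_lintegral (hb : Measurable b) [SFinite μ] :
    rieszEnergy lam μ b ≤
      2 * ∫⁻ t, ∫⁻ s in {s | b s ≤ b t}, b t * (b s * ‖t - s‖ₑ ^ (-lam)) ∂μ ∂μ := by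
  set U : Set (ℝ × ℝ) := {p | b p.2 ≤ b p.1}
  have hU : MeasurableSet U := measurableSet_le (by fun_prop) (by fun_prop)
  set H : ℝ × ℝ → ℝ≥0∞ := U.indicator fun p => b p.1 * (b p.2 * ‖p.1 - p.2‖ₑ ^ (-lam))
  have hH : Measurable H := Measurable.indicator (by fun_prop) hU
  have hsplit (p : ℝ × ℝ) : b p.1 * b p.2 * ‖p.1 - p.2‖ₑ ^ (-lam) ≤ H p + H p.swap := by
    simp only [H]
    obtain h | h := le_total (b p.1) (b p.2)
    · refine le_add_of_le_right (le_of_eq ?_)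
      rw [Set.indicator_of_mem (show p.swap ∈ U from h), Prod.fst_swap, Prod.snd_swap,
        enorm_sub_rev, mul_comm (b p.1), mul_assoc]
    · refine le_add_of_le_left (le_of_eq ?_)
      rw [Set.indicator_of_mem (show p ∈ U from h), mul_assoc]
  calc _ ≤ ∫⁻ p, (H p + H p.swap) ∂μ.prod μ := lintegral_mono hsplit
    _ = 2 * ∫⁻ p, H p ∂μ.prod μ := by
        rw [lintegral_add_left hH, lintegral_prod_swap, two_mul]
    _ = _ := by
        rw [lintegral_prod _ hH.aemeasurable]
        congr 1
        refine lintegral_congr fun t => ?_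
        rw [← lintegral_indicator (measurableSet_le hb measurable_const)]
        rfl

theorem rieszEnergy_le_lintegral_rpow [SFinite μ] (hμ : μ ≤ volume) (hb : Measurable b)
    (hlam₀ : 0 < lam) (hlam₁ : lam < 1) (hfin : ∀ t, b t ≠ ∞) :
    rieszEnergy lam μ b ≤ ENNReal.ofReal (2 * (2 / (1 - lam) + 2)) *
      (∫⁻ t, b t ^ (2 / (2 - lam)) ∂μ) ^ (2 - lam) := by
  have h₂ : 0 < 2 - lam := by linarith
  have h₁ : 0 < 1 - lam := by linarith
  set S := ∫⁻ t, b t ^ (2 / (2 - lam)) ∂μ with hSdef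
  obtain hS | hS := eq_or_ne S ∞
  · rw [hS, ENNReal.top_rpow_of_pos h₂, ENNReal.mul_top (by positivity)]
    exact le_top
  set c := ENNReal.ofReal (2 / (1 - lam) + 2)
  refine (rieszEnergy_le_two_mul_lintegral hb).trans ?_
  calc _ ≤ 2 * ∫⁻ t, c * S ^ (1 - lam) * b t ^ (2 / (2 - lam)) ∂μ := by
        gcongr 2 * ?_
        exact lintegral_mono_ae
          (ae_setLIntegral_mul_mul_enorm_sub_rpow_le hμ hb hlam₀ hlam₁ hfin hS)
    _ = _ := by
        rw [lintegral_const_mul _ (by fun_prop), ← hSdef, show 2 - lam = 1 - lam + 1 by ring,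
          ENNReal.rpow_add_of_nonneg _ _ h₁.le zero_le_one, ENNReal.rpow_one,
          ENNReal.ofReal_mul two_pos.le, ENNReal.ofReal_ofNat]
        ring

end HardyLittlewoodSobolev

section MeasurableSelection

variable {Ω : Type*} [MeasurableSpace Ω] {Q : ℕ → Ω → ℝ≥0∞}

theorem measurable_partialSups_apply (hQ : ∀ n, Measurable (Q n)) (n : ℕ) :
    Measurable (partialSups Q n) := by
  rw [partialSups_eq_sup'_range]
  exact Finset.measurable_range_sup' fun k _ => hQ k

theorem exists_measurable_le_partialSups_eq (hQ : ∀ n, Measurable (Q n)) (n : ℕ) :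
    ∃ N : Ω → ℕ, Measurable N ∧ (∀ ω, N ω ≤ n) ∧ ∀ ω, partialSups Q n ω = Q (N ω) ω := by
  induction n with
  | zero => exact ⟨fun _ => 0, measurable_const, fun _ => le_rfl, fun ω => by rw [partialSups_zero]⟩
  | succ n ih =>
    obtain ⟨N, hN, hNn, hNQ⟩ := ih
    have hmeas : Measurable (partialSups Q n) := measurable_partialSups_apply hQ n
    classical
    refine ⟨fun ω => if partialSups Q n ω ≤ Q (n + 1) ω then n + 1 else N ω,
      Measurable.ite (measurableSet_le hmeas (hQ _)) measurable_const hN, fun ω => ?_, fun ω => ?_⟩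
    · beta_reduce
      split_ifs
      · exact le_rfl
      · exact (hNn ω).trans n.le_succ
    · rw [partialSups_add_one, Pi.sup_apply]
      beta_reduce
      split_ifs with h
      · exact sup_eq_right.2 h
      · rw [sup_eq_left.2 (le_of_not_ge h), hNQ]

theorem lintegral_iSup_le_of_selector_le {μ : Measure Ω} {K : ℝ≥0∞} (hQ : ∀ n, Measurable (Q n))
    (hK : ∀ (n : ℕ) (N : Ω → ℕ), Measurable N → (∀ ω, N ω ≤ n) → ∫⁻ ω, Q (N ω) ω ∂μ ≤ K) :
    ∫⁻ ω, ⨆ n, Q n ω ∂μ ≤ K := by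
  have hsup (ω : Ω) : ⨆ n, Q n ω = ⨆ n, partialSups Q n ω := by
    rw [← iSup_apply, ← iSup_partialSups_eq, iSup_apply]
  simp only [hsup]
  rw [lintegral_iSup (measurable_partialSups_apply hQ) (partialSups_monotone Q)]
  refine iSup_le fun n => ?_
  obtain ⟨N, hN, hNn, hNQ⟩ := exists_measurable_le_partialSups_eq hQ n
  simp only [hNQ]
  exact hK n N hN hNn

end MeasurableSelection

section Duality

theorem le_rpow_of_le_mul_rpow_one_div {p q : ℝ} (hpq : p.HolderConjugate q) {X Z : ℝ≥0∞}
    (hX : X ≠ ∞) (h : X ≤ Z * X ^ (1 / p)) : X ≤ Z ^ q := by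
  obtain rfl | hX₀ := eq_or_ne X 0
  · exact zero_le
  have hroot : X ^ (1 / q) ≤ Z := by
    have hX' : X ^ (1 / p) ≠ 0 := by simp [hX₀, hX]
    have hX'' : X ^ (1 / p) ≠ ∞ := ENNReal.rpow_ne_top_of_nonneg (by simp [hpq.nonneg]) hX
    refine (ENNReal.mul_le_mul_iff_left hX' hX'').1 ?_
    rwa [← ENNReal.rpow_add _ _ hX₀ hX, hpq.symm.one_div_add_one_div, one_div_one,
      ENNReal.rpow_one]
  rwa [one_div, ENNReal.rpow_inv_le_iff hpq.symm.pos] at hroot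

variable {Ω K : Type*} [MeasurableSpace Ω] [MeasurableSpace K] {μ : Measure Ω} {ν : Measure K}

theorem sq_lintegral_mul_le_weighted {w f g : K → ℝ≥0∞} (hw : Measurable w) (hf : Measurable f)
    (hg : Measurable g) (hw₀ : ∀ᵐ κ ∂ν, w κ ≠ 0) (hw₁ : ∀ κ, w κ ≠ ∞) :
    (∫⁻ κ, f κ * g κ ∂ν) ^ 2 ≤
      (∫⁻ κ, w κ * f κ ^ 2 ∂ν) * ∫⁻ κ, (w κ)⁻¹ * g κ ^ 2 ∂ν := by
  have hsq (u v : ℝ≥0∞) : (u ^ (1 / 2 : ℝ) * v) ^ (2 : ℝ) = u * v ^ 2 := by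
    rw [ENNReal.mul_rpow_of_nonneg _ _ two_pos.le, ← ENNReal.rpow_mul, ENNReal.rpow_two]
    norm_num
  have hsplit : ∫⁻ κ, f κ * g κ ∂ν =
      ∫⁻ κ, (w κ ^ (1 / 2 : ℝ) * f κ) * ((w κ)⁻¹ ^ (1 / 2 : ℝ) * g κ) ∂ν := by
    refine lintegral_congr_ae (hw₀.mono fun κ hκ => ?_)
    beta_reduce
    rw [mul_mul_mul_comm, ← ENNReal.mul_rpow_of_nonneg _ _ (by norm_num),
      ENNReal.mul_inv_cancel hκ (hw₁ κ), ENNReal.one_rpow, one_mul]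
  have hCS := ENNReal.lintegral_mul_le_Lp_mul_Lq ν Real.HolderConjugate.two_two
    (f := fun κ => w κ ^ (1 / 2 : ℝ) * f κ) (g := fun κ => (w κ)⁻¹ ^ (1 / 2 : ℝ) * g κ)
    (by fun_prop) (by fun_prop)
  simp only [Pi.mul_apply, hsq] at hCS
  rw [hsplit]
  calc _ ≤ _ := pow_le_pow_left' hCS 2
    _ = _ := by
      rw [← ENNReal.rpow_two, ← ENNReal.mul_rpow_of_nonneg _ _ (by norm_num), ← ENNReal.rpow_mul]
      norm_num

variable [SFinite ν]

theorem enorm_integral_mul_integral_sq_le [SFinite μ] {w : K → ℝ≥0∞} (hw : Measurable w)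
    (hw₀ : ∀ᵐ κ ∂ν, w κ ≠ 0) (hw₁ : ∀ κ, w κ ≠ ∞) {Θ : Ω → K → ℂ}
    (hΘ : Measurable (Function.uncurry Θ)) {M : ℝ} (hM : ∀ ω κ, ‖Θ ω κ‖ ≤ M)
    {G : Ω → ℂ} (hGm : Measurable G) (hG : Integrable G μ)
    {a : K → ℂ} (ham : Measurable a) (ha : Integrable a ν) :
    ‖∫ ω, G ω * ∫ κ, a κ * Θ ω κ ∂ν ∂μ‖ₑ ^ 2 ≤
      (∫⁻ κ, w κ * ‖a κ‖ₑ ^ 2 ∂ν) * ∫⁻ κ, (w κ)⁻¹ * ‖∫ ω, G ω * Θ ω κ ∂μ‖ₑ ^ 2 ∂ν := by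
  have hU : Measurable fun κ => ∫ ω, G ω * Θ ω κ ∂μ :=
    (StronglyMeasurable.integral_prod_left'
      (f := fun p : Ω × K => G p.1 * Θ p.1 p.2) (by fun_prop)).measurable
  have hint : Integrable (fun p : Ω × K => G p.1 * (a p.2 * Θ p.1 p.2)) (μ.prod ν) := by
    have := (hG.mul_prod ha).mul_bdd (c := M) hΘ.aestronglyMeasurable
      (.of_forall fun p => hM p.1 p.2)
    simpa only [mul_assoc, Function.uncurry_apply_pair, Function.uncurry_def] using this
  have hswap : ∫ ω, G ω * ∫ κ, a κ * Θ ω κ ∂ν ∂μ = ∫ κ, a κ * ∫ ω, G ω * Θ ω κ ∂μ ∂ν := by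
    simp only [← integral_const_mul]
    rw [integral_integral_swap hint]
    simp only [mul_left_comm]
  rw [hswap]
  refine le_trans ?_ (sq_lintegral_mul_le_weighted hw ham.enorm hU.enorm hw₀ hw₁)
  gcongr
  refine (enorm_integral_le_lintegral_enorm _).trans_eq ?_
  simp only [enorm_mul]

variable [IsFiniteMeasure μ] {p q : ℝ}

theorem exists_measurable_enorm_rpow_eq_mul (hpq : p.HolderConjugate q) {v : Ω → ℂ}
    (hv : Measurable v) {B : ℝ} (hB : ∀ ω, ‖v ω‖ ≤ B) :
    ∃ G : Ω → ℂ, Measurable G ∧ Integrable G μ ∧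
      ∫⁻ ω, ‖G ω‖ₑ ^ p ∂μ = ∫⁻ ω, ‖v ω‖ₑ ^ q ∂μ ∧
      ‖∫ ω, G ω * v ω ∂μ‖ₑ = ∫⁻ ω, ‖v ω‖ₑ ^ q ∂μ := by
  set G : Ω → ℂ := fun ω => (starRingEnd ℂ) (v ω) * ((‖v ω‖ ^ (q - 2) : ℝ) : ℂ)
  have hG : Measurable G := by fun_prop
  have hq := hpq.symm.sub_one_pos
  have hnorm (ω : Ω) : ‖G ω‖ = ‖v ω‖ ^ (q - 1) := by
    rw [norm_mul, RCLike.norm_conj, Complex.norm_real, Real.norm_of_nonneg (by positivity),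
      ← Real.rpow_one_add' (norm_nonneg _) (by linarith)]
    ring_nf
  have hmul (ω : Ω) : G ω * v ω = ((‖v ω‖ ^ q : ℝ) : ℂ) := by
    rw [mul_right_comm, ← Complex.normSq_eq_conj_mul_self, ← Complex.ofReal_mul,
      Complex.normSq_eq_norm_sq, ← Real.rpow_two,
      ← Real.rpow_add' (norm_nonneg _) (by linarith), add_sub_cancel]
  refine ⟨G, hG, ?_, lintegral_congr fun ω => ?_, ?_⟩
  · refine .of_bound hG.aestronglyMeasurable (B ^ (q - 1)) (.of_forall fun ω => ?_)
    rw [hnorm]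
    gcongr
    exact hB ω
  · rw [← ofReal_norm, hnorm, ENNReal.ofReal_rpow_of_nonneg (by positivity) hpq.nonneg,
      ← Real.rpow_mul (norm_nonneg _), hpq.symm.sub_one_mul_conj, ← ofReal_norm,
      ENNReal.ofReal_rpow_of_nonneg (norm_nonneg _) hpq.symm.nonneg]
  · have hint : Integrable (fun ω => ‖v ω‖ ^ q) μ := by
      refine .of_bound (hv.norm.pow_const q).aestronglyMeasurable (B ^ q) (.of_forall fun ω => ?_)
      rw [Real.norm_of_nonneg (by positivity)]
      gcongr
      exacts [hpq.symm.nonneg, hB ω]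
    simp only [hmul]
    rw [integral_complex_ofReal, ← ofReal_norm, Complex.norm_real,
      Real.norm_of_nonneg (integral_nonneg fun ω => by positivity),
      ofReal_integral_eq_lintegral_ofReal hint (.of_forall fun ω => by positivity)]
    refine lintegral_congr fun ω => ?_
    rw [← ofReal_norm, ENNReal.ofReal_rpow_of_nonneg (norm_nonneg _) hpq.symm.nonneg]

theorem lintegral_enorm_integral_mul_rpow_le_of_dual (hpq : p.HolderConjugate q)
    {w : K → ℝ≥0∞} (hw : Measurable w) (hw₀ : ∀ᵐ κ ∂ν, w κ ≠ 0) (hw₁ : ∀ κ, w κ ≠ ∞)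
    {Θ : Ω → K → ℂ} (hΘ : Measurable (Function.uncurry Θ)) {M : ℝ} (hM : ∀ ω κ, ‖Θ ω κ‖ ≤ M)
    {C : ℝ≥0∞} (hdual : ∀ G : Ω → ℂ, Measurable G → Integrable G μ →
      ∫⁻ κ, (w κ)⁻¹ * ‖∫ ω, G ω * Θ ω κ ∂μ‖ₑ ^ 2 ∂ν ≤ C * (∫⁻ ω, ‖G ω‖ₑ ^ p ∂μ) ^ (2 / p))
    {a : K → ℂ} (ham : Measurable a) (ha : Integrable a ν) :
    ∫⁻ ω, ‖∫ κ, a κ * Θ ω κ ∂ν‖ₑ ^ q ∂μ ≤ (C * ∫⁻ κ, w κ * ‖a κ‖ₑ ^ 2 ∂ν) ^ (q / 2) := by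
  have hv : Measurable fun ω => ∫ κ, a κ * Θ ω κ ∂ν :=
    (StronglyMeasurable.integral_prod_right'
      (f := fun p : Ω × K => a p.2 * Θ p.1 p.2) (by fun_prop)).measurable
  have hB (ω : Ω) : ‖∫ κ, a κ * Θ ω κ ∂ν‖ ≤ ∫ κ, ‖a κ‖ * M ∂ν := by
    refine norm_integral_le_of_norm_le (ha.norm.mul_const M) (.of_forall fun κ => ?_)
    rw [norm_mul]
    gcongr
    exact hM ω κ
  obtain ⟨G, hGm, hG, hGp, hGv⟩ := exists_measurable_enorm_rpow_eq_mul (μ := μ) hpq hv hB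
  set X := ∫⁻ ω, ‖∫ κ, a κ * Θ ω κ ∂ν‖ₑ ^ q ∂μ
  have hX : X ≠ ∞ := hGv ▸ enorm_ne_top
  have hsq : X ^ 2 ≤ (∫⁻ κ, w κ * ‖a κ‖ₑ ^ 2 ∂ν) * (C * X ^ (2 / p)) := by
    have hG' := hdual G hGm hG
    rw [hGp] at hG'
    calc X ^ 2 = _ := by rw [← hGv]
      _ ≤ _ := enorm_integral_mul_integral_sq_le hw hw₀ hw₁ hΘ hM hGm hG ham ha
      _ ≤ _ := mul_le_mul_right hG' _
  set Y := C * ∫⁻ κ, w κ * ‖a κ‖ₑ ^ 2 ∂ν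
  have habsorb : X ≤ Y ^ (1 / 2 : ℝ) * X ^ (1 / p) := by
    have hroot := ENNReal.rpow_le_rpow hsq (z := 1 / 2) (by norm_num)
    rw [← ENNReal.rpow_natCast, ← ENNReal.rpow_mul, mul_left_comm, ← mul_assoc,
      ENNReal.mul_rpow_of_nonneg _ _ (by norm_num), ← ENNReal.rpow_mul] at hroot
    convert hroot using 2
    · norm_num
    · ring_nf
  refine (le_rpow_of_le_mul_rpow_one_div hpq hX habsorb).trans_eq ?_
  rw [← ENNReal.rpow_mul]
  ring_nf

end Duality

section LocalEstimate

/-- The constant of the dual estimate `lintegral_rpow_mul_enorm_integral_holderKernel_sq_le`, the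
product of the constants of subordination and of the Hardy–Littlewood–Sobolev inequality. -/
noncomputable def dualConst (r : ℝ) : ℝ :=
  (Real.Gamma (2 * r + 1 / 2))⁻¹ * (144 * Real.pi * (1 / (2 * r) + 1 / (2 - 2 * r))) * 12

theorem dualConst_pos {r : ℝ} (hr₀ : 0 < r) (hr₁ : r < 1) : 0 < dualConst r := by
  have : 0 < 2 - 2 * r := by linarith
  have := Real.Gamma_pos_of_pos (show 0 < 2 * r + 1 / 2 by positivity)
  rw [dualConst]
  positivity

/-- The kernel whose integral against `ĝ` is, up to the constant of Fourier inversion, the Hölder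
quotient of exponent `r` of the half-wave of `g` at time `t` between the points `x` and `y`. It
vanishes when `x = y`. -/
noncomputable def holderKernel {V : Type*} [NormedAddCommGroup V] [InnerProductSpace ℝ V]
    (r : ℝ) (x y : V) (t : ℝ) (κ : V) : ℂ :=
  ((‖x - y‖ ^ (-r) : ℝ) : ℂ) * (planeWave x t κ - planeWave y t κ)

variable {μ : Measure ℝ} [IsFiniteMeasure μ] {r M : ℝ} {x y : ℝ → Ed 2}

theorem lintegral_rpow_mul_enorm_integral_holderKernel_sq_le (hμ : μ ≤ volume) (hr₀ : 0 < r)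
    (hr₁ : r < 1) (hx : Measurable x) (hy : Measurable y) (hM : ∀ t, ‖x t - y t‖ ^ (-r) ≤ M)
    {G : ℝ → ℂ} (hGm : Measurable G) (hG : Integrable G μ) :
    ∫⁻ κ, ‖κ‖ₑ ^ (-(2 * (r + 3 / 4))) * ‖∫ t, G t * holderKernel r (x t) (y t) t κ ∂μ‖ₑ ^ 2 ≤
      ENNReal.ofReal (dualConst r) * (∫⁻ t, ‖G t‖ₑ ^ (4 / 3 : ℝ) ∂μ) ^ (3 / 2 : ℝ) := by
  have hΓ := Real.Gamma_pos_of_pos (show 0 < 2 * r + 1 / 2 by positivity)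
  have hK : 0 < 144 * Real.pi * (1 / (2 * r) + 1 / (2 - 2 * r)) := by
    have : 0 < 2 - 2 * r := by linarith
    positivity
  set A : ℝ → ℂ := fun t => G t * ((‖x t - y t‖ ^ (-r) : ℝ) : ℂ)
  have hxy : Measurable fun t => ((‖x t - y t‖ ^ (-r) : ℝ) : ℂ) := by fun_prop
  have hA : Integrable A μ :=
    hG.mul_bdd (c := M) hxy.aestronglyMeasurable (.of_forall fun t => by
      rw [Complex.norm_real, Real.norm_of_nonneg (by positivity)]
      exact hM t)
  have hle (t : ℝ) : ‖A t‖ₑ * ENNReal.ofReal (‖x t - y t‖ ^ r) ≤ ‖G t‖ₑ := by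
    rw [← ofReal_norm, ← ENNReal.ofReal_mul (norm_nonneg _), ← ofReal_norm]
    refine ENNReal.ofReal_le_ofReal ?_
    rw [norm_mul, Complex.norm_real, Real.norm_of_nonneg (by positivity), mul_assoc]
    refine mul_le_of_le_one_right (norm_nonneg _) ?_
    rw [Real.rpow_neg (norm_nonneg _)]
    exact inv_mul_le_one
  have henergy : rieszEnergy (1 / 2) μ (fun t => ‖A t‖ₑ * ENNReal.ofReal (‖x t - y t‖ ^ r)) ≤
      ENNReal.ofReal 12 * (∫⁻ t, ‖G t‖ₑ ^ (4 / 3 : ℝ) ∂μ) ^ (3 / 2 : ℝ) := by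
    have hHLS := rieszEnergy_le_lintegral_rpow hμ hGm.enorm (lam := 1 / 2) (by norm_num)
      (by norm_num) fun _ => enorm_ne_top
    norm_num only at hHLS ⊢
    exact (rieszEnergy_mono hle).trans hHLS
  have hsub := lintegral_rpow_mul_enorm_integral_planeWave_sub_sq_le hr₀ hr₁ hx hy (A := A)
    (by fun_prop) hA
  simp only [holderKernel, ← mul_assoc]
  rw [dualConst, mul_assoc, ENNReal.ofReal_mul (by positivity), ENNReal.ofReal_mul hK.le, mul_assoc,
    mul_assoc, ENNReal.ofReal_inv_of_pos hΓ,
    ← ENNReal.mul_le_iff_le_inv (by simpa using hΓ) ENNReal.ofReal_ne_top]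
  exact hsub.trans (mul_le_mul_right henergy _)

theorem lintegral_enorm_integral_mul_holderKernel_pow_four_le (hμ : μ ≤ volume) (hr₀ : 0 < r)
    (hr₁ : r < 1) (hx : Measurable x) (hy : Measurable y) (hM : ∀ t, ‖x t - y t‖ ^ (-r) ≤ M)
    {a : Ed 2 → ℂ} (ham : Measurable a) (ha : Integrable a) :
    ∫⁻ t, ‖∫ κ, a κ * holderKernel r (x t) (y t) t κ‖ₑ ^ 4 ∂μ ≤
      (ENNReal.ofReal (dualConst r) * ∫⁻ κ, ‖κ‖ₑ ^ (2 * (r + 3 / 4)) * ‖a κ‖ₑ ^ 2) ^ 2 := by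
  have hΘ : Measurable (Function.uncurry fun t κ => holderKernel r (x t) (y t) t κ) := by
    unfold holderKernel
    fun_prop
  have hΘM (t : ℝ) (κ : Ed 2) : ‖holderKernel r (x t) (y t) t κ‖ ≤ M * 2 := by
    rw [holderKernel, norm_mul, Complex.norm_real, Real.norm_of_nonneg (by positivity)]
    gcongr
    · exact (by positivity : (0 : ℝ) ≤ _).trans (hM t)
    · exact hM t
    · exact (norm_sub_le _ _).trans_eq (by rw [norm_planeWave, norm_planeWave, one_add_one_eq_two])
  have hw₀ : ∀ᵐ κ : Ed 2, ‖κ‖ₑ ^ (2 * (r + 3 / 4)) ≠ 0 := by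
    filter_upwards [measure_eq_zero_iff_ae_notMem.1 (measure_singleton (0 : Ed 2))] with κ hκ
    exact (ENNReal.rpow_pos (by simpa using hκ) enorm_ne_top).ne'
  have hdual := lintegral_enorm_integral_mul_rpow_le_of_dual (μ := μ) (p := 4 / 3) (q := 4)
    (Real.holderConjugate_iff.2 (by norm_num)) (by fun_prop) hw₀
    (fun κ => ENNReal.rpow_ne_top_of_nonneg (by positivity) enorm_ne_top) hΘ hΘM
    (C := ENNReal.ofReal (dualConst r)) (fun G hGm hG => ?_) ham ha
  · convert hdual using 1
    · simp only [← ENNReal.rpow_natCast]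
      norm_num
    · rw [← ENNReal.rpow_natCast]
      norm_num
  · convert lintegral_rpow_mul_enorm_integral_holderKernel_sq_le hμ hr₀ hr₁ hx hy hM hGm hG using 3
    · rw [ENNReal.rpow_neg]
    · norm_num

end LocalEstimate

section HolderSeminorm

variable {d : ℕ} {r : ℝ} {F : Type*} [NormedAddCommGroup F]

theorem holderSemi_eq_iSup_prod (v : Ed d → F) :
    holderSemi d r v = ⨆ z : Ed d × Ed d, ‖v z.1 - v z.2‖ₑ / ‖z.1 - z.2‖ₑ ^ r := by
  rw [iSup_prod]
  rfl

theorem enorm_sub_div_le_holderSemi (v : Ed d → F) (x y : Ed d) :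
    ‖v x - v y‖ₑ / ‖x - y‖ₑ ^ r ≤ holderSemi d r v :=
  le_iSup₂ (f := fun x y => ‖v x - v y‖ₑ / ‖x - y‖ₑ ^ r) x y

theorem holderSemi_add_le (u v : Ed d → F) :
    holderSemi d r (fun x => u x + v x) ≤ holderSemi d r u + holderSemi d r v := by
  refine iSup₂_le fun x y => ?_
  calc _ ≤ (‖u x - u y‖ₑ + ‖v x - v y‖ₑ) / ‖x - y‖ₑ ^ r := by
        rw [add_sub_add_comm]
        exact ENNReal.div_le_div_right (enorm_add_le _ _) _
    _ ≤ _ := by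
        rw [ENNReal.add_div]
        exact add_le_add (enorm_sub_div_le_holderSemi u x y) (enorm_sub_div_le_holderSemi v x y)

theorem lowerSemicontinuous_enorm_sub_div {v : Ed d → F} (hv : Continuous v) :
    LowerSemicontinuous fun z : Ed d × Ed d => ‖v z.1 - v z.2‖ₑ / ‖z.1 - z.2‖ₑ ^ r := by
  rintro ⟨x, y⟩
  obtain rfl | hxy := eq_or_ne x y
  · intro b hb
    simp at hb
  · have hxy' : ‖x - y‖ₑ ^ r ≠ 0 := by simp [ENNReal.rpow_eq_zero_iff, sub_ne_zero.2 hxy]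
    exact ContinuousAt.lowerSemicontinuousAt (ENNReal.Tendsto.div
      (Continuous.tendsto (by fun_prop) _) (.inr hxy') (Continuous.tendsto (by fun_prop) _)
      (.inr enorm_ne_top))

theorem holderSemi_eq_iSup_of_denseRange {ι : Type*} {p : ι → Ed d × Ed d} (hp : DenseRange p)
    {v : Ed d → F} (hv : Continuous v) :
    holderSemi d r v = ⨆ i, ‖v (p i).1 - v (p i).2‖ₑ / ‖(p i).1 - (p i).2‖ₑ ^ r := by
  rw [holderSemi_eq_iSup_prod]
  refine le_antisymm (iSup_le fun z => ?_) (iSup_le fun i => le_iSup_of_le (p i) le_rfl)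
  refine hp.induction_on z ((lowerSemicontinuous_enorm_sub_div hv).isClosed_preimage _) fun i => ?_
  exact le_iSup (fun i => ‖v (p i).1 - v (p i).2‖ₑ / ‖(p i).1 - (p i).2‖ₑ ^ r) i

variable {Ω : Type*} [MeasurableSpace Ω] {u : Ω → Ed d → F}

theorem measurable_holderSemi (hu : ∀ x, StronglyMeasurable fun ω => u ω x)
    (hc : ∀ ω, Continuous (u ω)) : Measurable fun ω => holderSemi d r (u ω) := by
  simp only [fun ω => holderSemi_eq_iSup_of_denseRange (r := r)
    (TopologicalSpace.denseRange_denseSeq (Ed d × Ed d)) (hc ω)]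
  exact .iSup fun n => ((hu _).sub (hu _)).enorm.div_const _

variable [NormedSpace ℝ F] {ν : Measure Ω}

theorem enorm_integral_sub_integral_le_lintegral {f g : Ω → F}
    (h : AEStronglyMeasurable (fun ω => f ω - g ω) ν) :
    ‖∫ ω, f ω ∂ν - ∫ ω, g ω ∂ν‖ₑ ≤ ∫⁻ ω, ‖f ω - g ω‖ₑ ∂ν := by
  obtain htop | hfin := eq_or_ne (∫⁻ ω, ‖f ω - g ω‖ₑ ∂ν) ∞
  · exact htop ▸ le_top
  have hfg : Integrable (fun ω => f ω - g ω) ν := ⟨h, hfin.lt_top⟩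
  by_cases hg : Integrable g ν
  · have hf : Integrable f ν :=
      (hfg.add hg).congr (.of_forall fun ω => sub_add_cancel (f ω) (g ω))
    rw [← integral_sub hf hg]
    exact enorm_integral_le_lintegral_enorm _
  · have hf : ¬ Integrable f ν := fun hf =>
      hg ((hf.sub hfg).congr (.of_forall fun ω => sub_sub_cancel (f ω) (g ω)))
    simp [integral_undef hf, integral_undef hg]

theorem holderSemi_integral_le (hu : ∀ x, AEStronglyMeasurable (fun ω => u ω x) ν) :
    holderSemi d r (fun x => ∫ ω, u ω x ∂ν) ≤ ∫⁻ ω, holderSemi d r (u ω) ∂ν := by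
  refine iSup₂_le fun x y => ?_
  obtain rfl | hxy := eq_or_ne x y
  · simp
  have hxy' : (‖x - y‖ₑ ^ r)⁻¹ ≠ ∞ := by simp [ENNReal.rpow_eq_zero_iff, sub_ne_zero.2 hxy]
  calc _ ≤ (∫⁻ ω, ‖u ω x - u ω y‖ₑ ∂ν) / ‖x - y‖ₑ ^ r :=
        ENNReal.div_le_div_right (enorm_integral_sub_integral_le_lintegral ((hu x).sub (hu y))) _
    _ = ∫⁻ ω, ‖u ω x - u ω y‖ₑ / ‖x - y‖ₑ ^ r ∂ν := by
        simp only [div_eq_mul_inv, lintegral_mul_const' _ _ hxy']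
    _ ≤ _ := lintegral_mono fun ω => enorm_sub_div_le_holderSemi (u ω) x y

end HolderSeminorm

section Minkowski

variable {Ω S : Type*} [MeasurableSpace Ω] [MeasurableSpace S] {μ : Measure Ω} {ν : Measure S}
  {H : Ω → S → ℝ≥0∞} {p : ℝ}

theorem lintegral_min_lintegral_rpow_le [IsFiniteMeasure μ] [SFinite ν] (hp : 1 < p)
    (hH : Measurable (Function.uncurry H)) (n : ℕ) :
    ∫⁻ ω, min (∫⁻ s, H ω s ∂ν) n ^ p ∂μ ≤ (∫⁻ s, (∫⁻ ω, H ω s ^ p ∂μ) ^ (1 / p) ∂ν) ^ p := by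
  set q := p.conjExponent
  have hpq : p.HolderConjugate q := .conjExponent hp
  set j : Ω → ℝ≥0∞ := fun ω => min (∫⁻ s, H ω s ∂ν) n
  have hj : Measurable j := hH.lintegral_prod_right'.min measurable_const
  have hfin : ∫⁻ ω, j ω ^ p ∂μ ≠ ∞ := by
    have hbound : ∫⁻ ω, j ω ^ p ∂μ ≤ ∫⁻ _, (n : ℝ≥0∞) ^ p ∂μ := by
      gcongr with ω
      exact min_le_right _ _
    refine ne_top_of_le_ne_top ?_ hbound
    rw [lintegral_const]
    finiteness
  refine le_rpow_of_le_mul_rpow_one_div hpq.symm hfin ?_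
  calc ∫⁻ ω, j ω ^ p ∂μ ≤ ∫⁻ ω, (∫⁻ s, H ω s * j ω ^ (p - 1) ∂ν) ∂μ := by
        refine lintegral_mono fun ω => ?_
        rw [lintegral_mul_const _ hH.of_uncurry_left]
        calc j ω ^ p = j ω * j ω ^ (p - 1) := by
              conv_lhs => rw [← add_sub_cancel 1 p,
                ENNReal.rpow_add_of_nonneg _ _ zero_le_one (sub_nonneg.2 hp.le), ENNReal.rpow_one]
          _ ≤ _ := by
              gcongr
              exact min_le_left _ _
    _ = ∫⁻ s, (∫⁻ ω, H ω s * j ω ^ (p - 1) ∂μ) ∂ν := lintegral_lintegral_swap (by fun_prop)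
    _ ≤ ∫⁻ s, (∫⁻ ω, H ω s ^ p ∂μ) ^ (1 / p) * (∫⁻ ω, j ω ^ p ∂μ) ^ (1 / q) ∂ν := by
        refine lintegral_mono fun s => ?_
        have hHolder := ENNReal.lintegral_mul_le_Lp_mul_Lq μ hpq (f := fun ω => H ω s)
          (g := fun ω => j ω ^ (p - 1)) hH.of_uncurry_right.aemeasurable (by fun_prop)
        simpa only [Pi.mul_apply, ← ENNReal.rpow_mul, hpq.sub_one_mul_conj] using hHolder
    _ = (∫⁻ s, (∫⁻ ω, H ω s ^ p ∂μ) ^ (1 / p) ∂ν) * (∫⁻ ω, j ω ^ p ∂μ) ^ (1 / q) := by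
        refine lintegral_mul_const _ (Measurable.pow_const ?_ _)
        exact (hH.pow_const p).lintegral_prod_left'

theorem lintegral_rpow_lintegral_le [IsFiniteMeasure μ] [SFinite ν] (hp : 1 < p)
    (hH : Measurable (Function.uncurry H)) :
    ∫⁻ ω, (∫⁻ s, H ω s ∂ν) ^ p ∂μ ≤ (∫⁻ s, (∫⁻ ω, H ω s ^ p ∂μ) ^ (1 / p) ∂ν) ^ p := by
  have hp₀ : 0 < p := one_pos.trans hp
  have hlim (X : ℝ≥0∞) : X ^ p = ⨆ n : ℕ, min X n ^ p := calc
    X ^ p = (⨆ n : ℕ, min X n) ^ p := by rw [← inf_iSup_eq, ENNReal.iSup_natCast, inf_top_eq]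
    _ = _ := (ENNReal.orderIsoRpow p hp₀).map_iSup _
  have hmono : Monotone fun (n : ℕ) ω => min (∫⁻ s, H ω s ∂ν) n ^ p := fun m n hmn ω => by
    beta_reduce
    gcongr
  rw [lintegral_congr fun ω => hlim _, lintegral_iSup (fun n => ?_) hmono]
  · exact iSup_le (lintegral_min_lintegral_rpow_le hp hH)
  · exact (hH.lintegral_prod_right'.min measurable_const).pow_const p

end Minkowski

section HalfWave

variable {d : ℕ}

theorem continuous_ftransform {g : Ed d → ℂ} (hg : Integrable g) : Continuous (ftransform d g) := by
  refine continuous_of_dominated (bound := fun x => ‖g x‖) (fun κ => ?_) (fun κ => ?_) hg.norm ?_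
  · exact (Continuous.aestronglyMeasurable (by fun_prop)).mul hg.aestronglyMeasurable
  · refine .of_forall fun x => ?_
    simp [Complex.norm_exp]
  · exact .of_forall fun x => by fun_prop

theorem halfWave_eq_integral (t : ℝ) (g : Ed d → ℂ) (x : Ed d) :
    halfWave d t g x = (((2 * Real.pi) ^ (-(d : ℝ)) : ℝ) : ℂ) *
      ∫ κ, planeWave x t κ * ftransform d g κ := rfl

theorem integrable_planeWave_mul_ftransform {g : Ed d → ℂ} (hg : Integrable (ftransform d g))
    (t : ℝ) (x : Ed d) : Integrable fun κ => planeWave x t κ * ftransform d g κ :=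
  hg.bdd_mul (c := 1) (by fun_prop) (.of_forall fun κ => (norm_planeWave x t κ).le)

theorem continuous_halfWave {g : Ed d → ℂ} (hg : Integrable (ftransform d g)) :
    Continuous (Function.uncurry fun t => halfWave d t g) := by
  simp only [Function.uncurry_def, halfWave_eq_integral]
  refine continuous_const.mul (continuous_of_dominated (bound := fun κ => ‖ftransform d g κ‖)
    (fun p => (integrable_planeWave_mul_ftransform hg p.1 p.2).aestronglyMeasurable)
    (fun p => .of_forall fun κ => ?_) hg.norm (.of_forall fun κ => ?_))
  · rw [norm_mul, norm_planeWave, one_mul]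
  · fun_prop

theorem measurable_holderSemi_halfWave {g : Ed d → ℂ} {r : ℝ} (hg : Integrable (ftransform d g)) :
    Measurable fun t => holderSemi d r (halfWave d t g) :=
  measurable_holderSemi (fun x => ((continuous_halfWave hg).uncurry_right x).stronglyMeasurable)
    fun t => (continuous_halfWave hg).uncurry_left t

variable {Ω : Type*} [MeasurableSpace Ω] {f : Ω → Ed d → ℂ}

theorem measurable_uncurry_ftransform (hf : Measurable (Function.uncurry f)) :
    Measurable (Function.uncurry fun ω => ftransform d (f ω)) := by
  have : Measurable fun q : (Ω × Ed d) × Ed d => f q.1.1 q.2 :=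
    hf.comp (measurable_fst.fst.prodMk measurable_snd)
  have : Measurable fun q : (Ω × Ed d) × Ed d =>
      Complex.exp (-(Complex.I * (⟪q.2, q.1.2⟫ : ℂ))) * f q.1.1 q.2 := by fun_prop
  exact this.stronglyMeasurable.integral_prod_right.measurable

theorem measurable_halfWave {τ : Ω → ℝ} (hτ : Measurable τ) (hf : Measurable (Function.uncurry f))
    (x : Ed d) : Measurable fun ω => halfWave d (τ ω) (f ω) x := by
  have hft := measurable_uncurry_ftransform hf
  have : Measurable fun q : Ω × Ed d => planeWave x (τ q.1) q.2 * ftransform d (f q.1) q.2 := by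
    fun_prop
  exact this.stronglyMeasurable.integral_prod_right.measurable.const_mul _

end HalfWave

section HomogeneousEstimate

theorem enorm_halfWave_sub_div {d : ℕ} {g : Ed d → ℂ} (hg : Integrable (ftransform d g)) (r t : ℝ)
    (x y : Ed d) : ‖halfWave d t g x - halfWave d t g y‖ₑ / ‖x - y‖ₑ ^ r =
      ENNReal.ofReal ((2 * Real.pi) ^ (-(d : ℝ))) *
        ‖∫ κ, ftransform d g κ * holderKernel r x y t κ‖ₑ := by
  have hint : ∫ κ, ftransform d g κ * holderKernel r x y t κ =
      ((‖x - y‖ ^ (-r) : ℝ) : ℂ) * ((∫ κ, planeWave x t κ * ftransform d g κ) -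
        ∫ κ, planeWave y t κ * ftransform d g κ) := by
    rw [← integral_sub (integrable_planeWave_mul_ftransform hg t x)
      (integrable_planeWave_mul_ftransform hg t y), ← integral_const_mul]
    refine integral_congr_ae (.of_forall fun κ => ?_)
    simp only [holderKernel]
    ring
  obtain rfl | hxy := eq_or_ne x y
  · simp [hint]
  have hnorm : 0 < ‖x - y‖ := norm_pos_iff.2 (sub_ne_zero.2 hxy)
  have hpow : ‖((‖x - y‖ ^ (-r) : ℝ) : ℂ)‖ₑ = (‖x - y‖ₑ ^ r)⁻¹ := by
    rw [← ofReal_norm, Complex.norm_of_nonneg (by positivity), Real.rpow_neg (norm_nonneg _),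
      ENNReal.ofReal_inv_of_pos (by positivity), ← ENNReal.ofReal_rpow_of_pos hnorm, ofReal_norm]
  rw [hint, halfWave_eq_integral, halfWave_eq_integral, ← mul_sub, enorm_mul, enorm_mul, hpow,
    ← ofReal_norm (((_ : ℝ) : ℂ)), Complex.norm_of_nonneg (by positivity), div_eq_mul_inv,
    mul_assoc, mul_comm _⁻¹]

theorem sobolevSemi_pow_four {d : ℕ} (θ : ℝ) (g : Ed d → ℂ) :
    sobolevSemi d θ g ^ 4 = (ENNReal.ofReal ((2 * Real.pi) ^ (-(d : ℝ))) *
      ∫⁻ κ, ‖κ‖ₑ ^ (2 * θ) * ‖ftransform d g κ‖ₑ ^ 2) ^ 2 := by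
  rw [sobolevSemi, ← ENNReal.rpow_natCast, ← ENNReal.rpow_mul, ← ENNReal.rpow_natCast]
  norm_num
  rfl

variable {r : ℝ} {g : Ed 2 → ℂ}

/-- The constant of the homogeneous estimate `lintegral_holderSemi_halfWave_pow_four_le`. -/
noncomputable def strichartzConst (r : ℝ) : ℝ :=
  √(dualConst r) / (2 * Real.pi)

theorem strichartzConst_pos (hr₀ : 0 < r) (hr₁ : r < 1) : 0 < strichartzConst r := by
  have := Real.sqrt_pos.2 (dualConst_pos hr₀ hr₁)
  rw [strichartzConst]
  positivity

theorem ofReal_strichartzConst_sq (hr₀ : 0 < r) (hr₁ : r < 1) :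
    ENNReal.ofReal (strichartzConst r) ^ 2 =
      ENNReal.ofReal ((2 * Real.pi) ^ (-((2 : ℕ) : ℝ))) * ENNReal.ofReal (dualConst r) := by
  rw [← ENNReal.ofReal_pow (strichartzConst_pos hr₀ hr₁).le, ← ENNReal.ofReal_mul (by positivity),
    strichartzConst, div_pow, Real.sq_sqrt (dualConst_pos hr₀ hr₁).le,
    Real.rpow_neg (by positivity), Real.rpow_natCast, div_eq_inv_mul]

theorem lintegral_holderSemi_halfWave_pow_four_le_of_isFiniteMeasure {μ : Measure ℝ}
    [IsFiniteMeasure μ] (hμ : μ ≤ volume) (hr₀ : 0 < r) (hr₁ : r < 1) (hg : Integrable g)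
    (hg' : Integrable (ftransform 2 g)) :
    ∫⁻ t, holderSemi 2 r (halfWave 2 t g) ^ 4 ∂μ ≤
      (ENNReal.ofReal (strichartzConst r) * sobolevSemi 2 (r + 3 / 4) g) ^ 4 := by
  set p := TopologicalSpace.denseSeq (Ed 2 × Ed 2)
  have hsup (t : ℝ) : holderSemi 2 r (halfWave 2 t g) ^ 4 =
      ⨆ n, (‖halfWave 2 t g (p n).1 - halfWave 2 t g (p n).2‖ₑ /
        ‖(p n).1 - (p n).2‖ₑ ^ r) ^ 4 := by
    rw [holderSemi_eq_iSup_of_denseRange (TopologicalSpace.denseRange_denseSeq _)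
      ((continuous_halfWave hg').uncurry_left t), ENNReal.iSup_pow]
  simp only [hsup]
  refine lintegral_iSup_le_of_selector_le (fun n => ?_) fun n N hN hNn => ?_
  · have (x : Ed 2) : Measurable fun t => halfWave 2 t g x :=
      ((continuous_halfWave hg').comp (.prodMk_left x)).measurable
    fun_prop
  have hp : Measurable fun t => p (N t) := measurable_from_nat.comp hN
  have hM (t : ℝ) : ‖(p (N t)).1 - (p (N t)).2‖ ^ (-r) ≤
      ∑ k ∈ Finset.range (n + 1), ‖(p k).1 - (p k).2‖ ^ (-r) :=
    Finset.single_le_sum (f := fun k => ‖(p k).1 - (p k).2‖ ^ (-r))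
      (fun k _ => by positivity) (Finset.mem_range_succ_iff.2 (hNn t))
  simp only [enorm_halfWave_sub_div hg', mul_pow]
  rw [lintegral_const_mul' _ _ (by finiteness)]
  calc _ ≤ _ := mul_le_mul_right (lintegral_enorm_integral_mul_holderKernel_pow_four_le hμ hr₀ hr₁
        hp.fst hp.snd hM (continuous_ftransform hg).measurable hg') _
    _ = _ := by
      rw [sobolevSemi_pow_four, pow_mul (ENNReal.ofReal (strichartzConst r)) 2 2,
        ofReal_strichartzConst_sq hr₀ hr₁]
      ring

theorem lintegral_holderSemi_halfWave_pow_four_le (hr₀ : 0 < r) (hr₁ : r < 1)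
    (hg : Integrable g) (hg' : Integrable (ftransform 2 g)) :
    ∫⁻ t, holderSemi 2 r (halfWave 2 t g) ^ 4 ≤
      (ENNReal.ofReal (strichartzConst r) * sobolevSemi 2 (r + 3 / 4) g) ^ 4 := by
  have hcover : AECover volume Filter.atTop fun n : ℕ => Set.Icc (-(n : ℝ)) n :=
    aecover_Icc (Filter.tendsto_neg_atTop_atBot.comp tendsto_natCast_atTop_atTop)
      tendsto_natCast_atTop_atTop
  refine le_of_tendsto' (hcover.lintegral_tendsto_of_nat
    ((measurable_holderSemi_halfWave hg').pow_const 4).aemeasurable) fun n => ?_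
  exact lintegral_holderSemi_halfWave_pow_four_le_of_isFiniteMeasure
    Measure.restrict_le_self hr₀ hr₁ hg hg'

end HomogeneousEstimate

section Duhamel

variable {r : ℝ} {f : ℝ → Ed 2 → ℂ}

theorem measurable_uncurry_holderSemi_halfWave_sub (hf : Measurable (Function.uncurry f))
    (hf' : ∀ s, Integrable (ftransform 2 (f s))) :
    Measurable (Function.uncurry fun t s => holderSemi 2 r (halfWave 2 (t - s) (f s))) :=
  measurable_holderSemi
    (fun x => (measurable_halfWave (f := fun q : ℝ × ℝ => f q.2)
      (measurable_fst.sub measurable_snd)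
      (hf.comp (measurable_fst.snd.prodMk measurable_snd)) x).stronglyMeasurable)
    fun q => (continuous_halfWave (hf' q.2)).uncurry_left _

theorem lintegral_holderSemi_halfWave_sub_pow_four_le (hr₀ : 0 < r) (hr₁ : r < 1) {g : Ed 2 → ℂ}
    (hg : Integrable g) (hg' : Integrable (ftransform 2 g)) (s : ℝ) (I : Set ℝ) :
    (∫⁻ t in I, holderSemi 2 r (halfWave 2 (t - s) g) ^ (4 : ℝ)) ^ ((1 : ℝ) / 4) ≤
      ENNReal.ofReal (strichartzConst r) * sobolevSemi 2 (r + 3 / 4) g := by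
  rw [one_div, ENNReal.rpow_inv_le_iff four_pos]
  calc _ ≤ ∫⁻ t, holderSemi 2 r (halfWave 2 (t - s) g) ^ (4 : ℝ) := setLIntegral_le_lintegral _ _
    _ = ∫⁻ t, holderSemi 2 r (halfWave 2 t g) ^ (4 : ℝ) :=
      lintegral_sub_right_eq_self (fun t => holderSemi 2 r (halfWave 2 t g) ^ (4 : ℝ)) s
    _ ≤ _ := by
      simpa only [ENNReal.rpow_ofNat] using
        lintegral_holderSemi_halfWave_pow_four_le hr₀ hr₁ hg hg'

theorem lintegral_lintegral_holderSemi_halfWave_sub_le (hr₀ : 0 < r) (hr₁ : r < 1) (T : ℝ)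
    (hf : Measurable (Function.uncurry f)) (hfi : ∀ s, Integrable (f s))
    (hf' : ∀ s, Integrable (ftransform 2 (f s))) :
    (∫⁻ t in Set.Ioc 0 T, (∫⁻ s in Set.Ioc 0 T,
        holderSemi 2 r (halfWave 2 (t - s) (f s))) ^ (4 : ℝ)) ^ ((1 : ℝ) / 4) ≤
      ENNReal.ofReal (strichartzConst r) *
        ∫⁻ s in Set.Ioc 0 T, sobolevSemi 2 (r + 3 / 4) (f s) := by
  rw [one_div, ENNReal.rpow_inv_le_iff four_pos, ← lintegral_const_mul' _ _ (by finiteness)]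
  refine (lintegral_rpow_lintegral_le (by norm_num)
    (measurable_uncurry_holderSemi_halfWave_sub hf hf')).trans ?_
  gcongr with s
  exact lintegral_holderSemi_halfWave_sub_pow_four_le hr₀ hr₁ (hfi s) (hf' s) s _

theorem holderSemi_add_intervalIntegral_halfWave_le {t T : ℝ} (ht : t ∈ Set.Ioc 0 T)
    (u : Ed 2 → ℂ) (hf : Measurable (Function.uncurry f)) :
    holderSemi 2 r (fun x => u x + ∫ s in (0 : ℝ)..t, halfWave 2 (t - s) (f s) x) ≤
      holderSemi 2 r u + ∫⁻ s in Set.Ioc 0 T, holderSemi 2 r (halfWave 2 (t - s) (f s)) := by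
  simp only [intervalIntegral.integral_of_le ht.1.le]
  refine (holderSemi_add_le _ _).trans ?_
  gcongr
  refine (holderSemi_integral_le fun x => ?_).trans
    (lintegral_mono_set (Set.Ioc_subset_Ioc_right ht.2))
  exact (measurable_halfWave (measurable_const.sub measurable_id) hf x).aestronglyMeasurable

theorem lintegral_holderSemi_duhamel_pow_four_le (hr₀ : 0 < r) (hr₁ : r < 1) (T : ℝ)
    {w₀ : Ed 2 → ℂ} (hw : Integrable w₀) (hw' : Integrable (ftransform 2 w₀))
    (hf : Measurable (Function.uncurry f)) (hfi : ∀ s, Integrable (f s))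
    (hf' : ∀ s, Integrable (ftransform 2 (f s))) :
    (∫⁻ t in Set.Ioc 0 T, holderSemi 2 r (fun x => halfWave 2 t w₀ x +
        ∫ s in (0 : ℝ)..t, halfWave 2 (t - s) (f s) x) ^ (4 : ℝ)) ^ ((1 : ℝ) / 4) ≤
      ENNReal.ofReal (strichartzConst r) * (sobolevSemi 2 (r + 3 / 4) w₀ +
        ∫⁻ s in Set.Ioc 0 T, sobolevSemi 2 (r + 3 / 4) (f s)) := by
  set A : ℝ → ℝ≥0∞ := fun t => holderSemi 2 r (halfWave 2 t w₀)
  set B : ℝ → ℝ≥0∞ := fun t => ∫⁻ s in Set.Ioc 0 T, holderSemi 2 r (halfWave 2 (t - s) (f s))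
  have hA : Measurable A := measurable_holderSemi_halfWave hw'
  have hB : Measurable B :=
    (measurable_uncurry_holderSemi_halfWave_sub hf hf').lintegral_prod_right'
  calc _ ≤ (∫⁻ t in Set.Ioc 0 T, (A + B) t ^ (4 : ℝ)) ^ ((1 : ℝ) / 4) := by
        gcongr ?_ ^ _
        refine setLIntegral_mono' measurableSet_Ioc fun t ht => ?_
        gcongr
        exact holderSemi_add_intervalIntegral_halfWave_le ht _ hf
    _ ≤ (∫⁻ t in Set.Ioc 0 T, A t ^ (4 : ℝ)) ^ ((1 : ℝ) / 4) +
        (∫⁻ t in Set.Ioc 0 T, B t ^ (4 : ℝ)) ^ ((1 : ℝ) / 4) :=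
      ENNReal.lintegral_Lp_add_le hA.aemeasurable hB.aemeasurable (by norm_num)
    _ ≤ _ := by
      rw [mul_add]
      gcongr
      · simpa only [sub_zero] using
          lintegral_holderSemi_halfWave_sub_pow_four_le hr₀ hr₁ hw hw' 0 (Set.Ioc 0 T)
      · exact lintegral_lintegral_holderSemi_halfWave_sub_le hr₀ hr₁ T hf hfi hf'

end Duhamel

section Schwartz

theorem ftransform_eq_fourier {d : ℕ} (g : Ed d → ℂ) (κ : Ed d) :
    ftransform d g κ = FourierTransform.fourier g ((2 * Real.pi)⁻¹ • κ) := by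
  rw [Real.fourier_eq']
  refine integral_congr_ae (.of_forall fun x => ?_)
  have hphase : -2 * Real.pi * ⟪x, (2 * Real.pi)⁻¹ • κ⟫ = -⟪x, κ⟫ := by
    rw [inner_smul_right]
    field_simp
  simp only [hphase, smul_eq_mul, Complex.ofReal_neg, neg_mul (_ : ℂ), mul_comm Complex.I]

theorem integrable_ftransform_schwartzMap {d : ℕ} (g : SchwartzMap (Ed d) ℂ) :
    Integrable (ftransform d g) := by
  simp only [funext (ftransform_eq_fourier g), ← SchwartzMap.fourier_coe]
  exact (FourierTransform.fourier g).integrable.comp_smul (by positivity)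

theorem measurable_uncurry_indicator_of_continuousOn {α β γ : Type*} [TopologicalSpace α]
    [MeasurableSpace α] [TopologicalSpace β] [MeasurableSpace β] [OpensMeasurableSpace (α × β)]
    [TopologicalSpace γ] [MeasurableSpace γ] [BorelSpace γ] [Zero γ] {s : Set α}
    {f : α → β → γ} (hs : MeasurableSet s)
    (hf : ContinuousOn (Function.uncurry f) (s ×ˢ Set.univ)) :
    Measurable (Function.uncurry (s.indicator f)) := by
  have huncurry : Function.uncurry (s.indicator f) =
      (s ×ˢ Set.univ).indicator (Function.uncurry f) := by
    ext ⟨a, b⟩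
    by_cases ha : a ∈ s <;> simp [ha]
  classical
  rw [huncurry, ← Set.piecewise_eq_indicator]
  exact hf.measurable_piecewise continuousOn_const (hs.prod .univ)

end Schwartz

theorem stmt16_general (r : ℝ) (hr₀ : 0 < r) (hr₁ : r < 1) :
    ∃ C : ℝ, 0 < C ∧ ∀ (T : ℝ) (w₀ : Ed 2 → ℂ) (f : ℝ → Ed 2 → ℂ),
      Integrable w₀ → Integrable (ftransform 2 w₀) →
      Measurable (Function.uncurry ((Set.Ioc 0 T).indicator f)) →
      (∀ s ∈ Set.Ioc 0 T, Integrable (f s)) →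
      (∀ s ∈ Set.Ioc 0 T, Integrable (ftransform 2 (f s))) →
      (∫⁻ t in Set.Ioc 0 T, holderSemi 2 r (fun x => halfWave 2 t w₀ x +
          ∫ s in (0 : ℝ)..t, halfWave 2 (t - s) (f s) x) ^ (4 : ℝ)) ^ ((1 : ℝ) / 4) ≤
        ENNReal.ofReal C * (sobolevSemi 2 (r + 3 / 4) w₀ +
          ∫⁻ t in Set.Ioc 0 T, sobolevSemi 2 (r + 3 / 4) (f t)) := by
  refine ⟨strichartzConst r, strichartzConst_pos hr₀ hr₁, fun T w₀ f hw hw' hf hfi hf' => ?_⟩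
  set F := (Set.Ioc 0 T).indicator f
  have hF {s : ℝ} (hs : s ∈ Set.Ioc 0 T) : F s = f s := Set.indicator_of_mem hs f
  have hF₀ {s : ℝ} (hs : s ∉ Set.Ioc 0 T) : F s = 0 := Set.indicator_of_notMem hs f
  have hFi (s : ℝ) : Integrable (F s) := by
    by_cases hs : s ∈ Set.Ioc 0 T
    · exact hF hs ▸ hfi s hs
    · exact hF₀ hs ▸ integrable_zero _ _ _
  have hF' (s : ℝ) : Integrable (ftransform 2 (F s)) := by
    by_cases hs : s ∈ Set.Ioc 0 T
    · exact hF hs ▸ hf' s hs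
    · have : ftransform 2 (F s) = 0 := by
        ext κ
        simp [hF₀ hs, ftransform]
      exact this ▸ integrable_zero _ _ _
  convert lintegral_holderSemi_duhamel_pow_four_le hr₀ hr₁ T hw hw' hf hFi hF' using 2
  · refine setLIntegral_congr_fun measurableSet_Ioc fun t ht => ?_
    have hduhamel (x : Ed 2) : ∫ s in (0 : ℝ)..t, halfWave 2 (t - s) (f s) x =
        ∫ s in (0 : ℝ)..t, halfWave 2 (t - s) (F s) x := by
      simp only [intervalIntegral.integral_of_le ht.1.le]
      exact setIntegral_congr_fun measurableSet_Ioc fun s hs => by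
        simp only [hF (Set.Ioc_subset_Ioc_right ht.2 hs)]
    simp only [hduhamel]
  · congr 1
    exact setLIntegral_congr_fun measurableSet_Ioc fun s hs => by simp only [hF hs]

/-- Strichartz estimate for the half-wave equation in `d = 2`:
for `0 < r < 1`, `θ = r + 3/4`, and `w(t) = e^{itD}w₀ + ∫₀^t e^{i(t−s)D} f(s) ds`,
`(∫₀^T {w(t)}_r⁴ dt)^{1/4} ≤ C ([w₀]_θ + ∫₀^T [f(t)]_θ dt)` with `C` independent of `T`. -/
theorem stmt16 (r θ : ℝ) (hr0 : 0 < r) (hr1 : r < 1) (hθ : θ = r + 3 / 4) :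
    ∃ C : ℝ, 0 < C ∧ ∀ (T : ℝ), 0 < T →
      ∀ (w₀ : SchwartzMap (Ed 2) ℂ) (f : ℝ → SchwartzMap (Ed 2) ℂ),
      ContinuousOn (fun q : ℝ × Ed 2 => f q.1 q.2) (Set.Icc 0 T ×ˢ Set.univ) →
      (∫⁻ t in Set.Ioc (0 : ℝ) T, sobolevSemi 2 θ ⇑(f t)) ≠ ⊤ →
      (∫⁻ t in Set.Ioc (0 : ℝ) T,
          holderSemi 2 r
            (fun x => halfWave 2 t (⇑w₀) x +
              ∫ s in (0 : ℝ)..t, halfWave 2 (t - s) (⇑(f s)) x) ^ (4 : ℝ)) ^ ((1 : ℝ) / 4)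
        ≤ ENNReal.ofReal C *
            (sobolevSemi 2 θ ⇑w₀ + ∫⁻ t in Set.Ioc (0 : ℝ) T, sobolevSemi 2 θ ⇑(f t)) := by
  subst hθ
  obtain ⟨C, hC, hest⟩ := stmt16_general r hr0 hr1
  refine ⟨C, hC, fun T _ w₀ f hf _ => hest T w₀ (fun s => f s) w₀.integrable
    (integrable_ftransform_schwartzMap w₀) ?_ (fun s _ => (f s).integrable)
    fun s _ => integrable_ftransform_schwartzMap (f s)⟩
  exact measurable_uncurry_indicator_of_continuousOn measurableSet_Ioc
    (hf.mono (Set.prod_mono_left Set.Ioc_subset_Icc_self))
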